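/- arXiv:1803.04753 — 5 statements merged into one kernel-verified Lean document; each statement's English description precedes it below -/
import Mathlib

section
/- Let K be a field of characteristic zero equipped with a derivation D : K → K (an additive map satisfying D(xy) = x·D(y) + y·D(x)), and let C = {x ∈ K : D(x) = 0} be its field of constants. Let n ≥ 1 and let x₁,…,xₙ, y₁,…,yₙ ∈ K be such that for each i one has D(yᵢ) = yᵢ·D(xᵢ), yᵢ ≠ 0 and D(xᵢ) ≠ 0 (i.e. the (xᵢ,yᵢ) are non-constant solutions of the exponential differential equation Dy = y·Dx). Then the transcendence degree over C of the subfield C(x₁,…,xₙ,y₁,…,yₙ) of K generated by C and the xᵢ, yᵢ is at least d + 1, where d is the dimension of the ℚ-linear span of the images of x₁,…,xₙ in the quotient ℚ-vector space K/C. -/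
/-- The transcendence degree of a subfield `E` of `K` over a subfield `F`:
the supremum of the cardinalities of subsets of `E` that are algebraically
independent over `F`. -/
noncomputable def Subfield.trdeg {K : Type*} [Field K] (F E : Subfield K) : Cardinal :=
  ⨆ t : {t : Set K // t ⊆ (E : Set K) ∧ AlgebraicIndependent F ((↑) : t → K)}, Cardinal.mk t.1

/-- The subfield of `K` generated by a subfield `F` together with a set `s`. -/
def Subfield.extend {K : Type*} [Field K] (F : Subfield K) (s : Set K) : Subfield K :=
  Subfield.closure ((F : Set K) ∪ s)

/-- The Euler operator `t d/dt` on Laurent series. -/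
noncomputable def eulerFun {M : Type*} [Field M] (f : LaurentSeries M) : LaurentSeries M where
  coeff n := (n : M) * f.coeff n
  isPWO_support' := f.isPWO_support.mono (by intro n hn; simp at hn ⊢; tauto)

theorem eulerFun_support {M : Type*} [Field M] (f : LaurentSeries M) :
    (eulerFun f).support ⊆ f.support := by
  intro n hn
  simp [eulerFun] at hn ⊢
  tauto

open HahnSeries in
theorem eulerFun_mul {M : Type*} [Field M] (f g : LaurentSeries M) :
    eulerFun (f * g) = f * eulerFun g + g * eulerFun f := by
  ext n
  rw [mul_comm g, coeff_add, coeff_mul_right' g.isPWO_support (eulerFun_support g),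
    coeff_mul_left' f.isPWO_support (eulerFun_support f)]
  simp only [eulerFun]
  rw [coeff_mul, Finset.mul_sum, ← Finset.sum_add_distrib]
  refine Finset.sum_congr rfl fun ij hij => ?_
  obtain ⟨-, -, rfl⟩ := (Finset.mem_antidiagonal).1 hij
  push_cast
  ring

/-- An additive map satisfying the Leibniz rule is a derivation. -/
def mkIntDer {P : Type*} [Field P] (f : P →+ P) (h : ∀ a b, f (a * b) = a * f b + b * f a) :
    Derivation ℤ P P :=
  Derivation.mk' f.toIntLinearMap h

/-- The Euler derivation `t d/dt` on Laurent series. -/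
noncomputable def eulerDer (M : Type*) [Field M] :=
  mkIntDer (P := LaurentSeries M)
    { toFun := eulerFun
      map_zero' := by ext n; simp only [eulerFun]; exact mul_zero _
      map_add' := by intro f g; ext n; exact mul_add _ _ _ } eulerFun_mul

open HahnSeries in
theorem eulerDer_coeff {M : Type*} [Field M] (f : LaurentSeries M) (n : ℤ) :
    (eulerDer M f).coeff n = n * f.coeff n := rfl

open HahnSeries in
theorem eulerDer_res {M : Type*} [Field M] (f h : LaurentSeries M) (hf : f ≠ 0)
    (hh : eulerDer M f = h * f) : h.coeff 0 = f.order := by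
  have hlc : f.coeff f.order ≠ 0 := coeff_order_eq_zero.not.mpr hf
  by_cases h0 : h = 0
  · subst h0
    have := congrArg (fun g => g.coeff f.order) hh
    simp only [eulerDer_coeff, zero_mul, coeff_zero, mul_eq_zero, hlc, or_false] at this
    simp [this]
  have h1 := coeff_mul_order_add_order h f
  rw [← hh, eulerDer_coeff, leadingCoeff_eq, leadingCoeff_eq] at h1
  have hc : h.coeff h.order ≠ 0 := coeff_order_eq_zero.not.mpr h0
  rcases lt_trichotomy h.order 0 with hl | hl | hl
  · rw [coeff_eq_zero_of_lt_order (by linarith : h.order + f.order < f.order)] at h1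
    simp [hlc, hc] at h1
  · rw [hl, zero_add] at h1
    exact (mul_right_cancel₀ hlc h1).symm
  · rw [coeff_eq_zero_of_lt_order hl]
    have h2 : (eulerDer M f).coeff f.order = 0 := by
      rw [hh]
      apply coeff_eq_zero_of_lt_order
      rw [order_mul h0 hf]; linarith
    rw [eulerDer_coeff] at h2
    simpa [hlc, eq_comm] using h2

theorem exists_extend_der (P Q : Type*) [Field P] [Field Q] [CharZero P] [Algebra P Q] [Algebra.IsAlgebraic P Q]
    (δ : Derivation ℤ P P) : ∃ δ' : Derivation ℤ Q Q, ∀ p, δ' (algebraMap P Q p) = algebraMap P Q (δ p) := by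
  have : Algebra.FormallyEtale P Q := Algebra.FormallyEtale.of_isSeparable P Q
  let e := KaehlerDifferential.tensorKaehlerEquivOfFormallyEtale ℤ P Q
  let l : TensorProduct P Q (Ω[P⁄ℤ]) →ₗ[Q] Q := 
    LinearMap.liftBaseChange Q ((Algebra.linearMap P Q).comp δ.liftKaehlerDifferential)
  refine ⟨(l.comp e.symm.toLinearMap).compDer (KaehlerDifferential.D ℤ Q), fun p => ?_⟩
  have := KaehlerDifferential.tensorKaehlerEquivOfFormallyEtale_symm_D_algebraMap ℤ P Q p
  simp [e, this, l]

theorem der_commute {P Q : Type*} [Field P] [CharZero P] [Field Q] [Algebra P Q]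
    [Algebra.IsAlgebraic P Q] (δ : Derivation ℤ P P) (δ' : Derivation ℤ Q Q)
    (hδ : ∀ p, δ' (algebraMap P Q p) = algebraMap P Q (δ p)) (f : Q →ₐ[P] Q) (q : Q) :
    δ' (f q) = f (δ' q) := by
  let : Differential P := ⟨δ⟩
  let : Differential Q := ⟨δ'⟩
  have : DifferentialAlgebra P Q := ⟨hδ⟩
  exact (Differential.algHom_deriv' f f.injective q).symm

theorem der_prod_div {Q : Type*} [Field Q] (δ : Derivation ℤ Q Q) {ι : Type*} (s : Finset ι)
    (f : ι → Q) (hf : ∀ i, f i ≠ 0) : δ (∏ i ∈ s, f i) / (∏ i ∈ s, f i) = ∑ i ∈ s, δ (f i) / f i := by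
  let : Differential Q := ⟨δ⟩
  exact Differential.logDeriv_prod _ s f (fun i _ => hf i)

theorem norm_trace {P Q : Type*} [Field P] [CharZero P] [Field Q] [Algebra P Q]
    [Algebra.IsAlgebraic P Q] [IsAlgClosed Q] (δ : Derivation ℤ P P) (δ' : Derivation ℤ Q Q)
    (hδ : ∀ p, δ' (algebraMap P Q p) = algebraMap P Q (δ p)) {ι : Type*} [Fintype ι]
    (c : ι → P) (y : ι → Q) (hy : ∀ i, y i ≠ 0) (v : Q)
    (h : ∑ i, algebraMap P Q (c i) * (δ' (y i) / y i) = δ' v) :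
    ∃ (k : ℕ) (N : ι → P) (w : P), k ≠ 0 ∧ (∀ i, N i ≠ 0) ∧
      ∑ i, c i * (δ (N i) / N i) = δ w ∧
      ∀ (m : ι → ℤ) (p : P), ∏ i, y i ^ m i = algebraMap P Q p → ∏ i, N i ^ m i = p ^ k := by
  classical
  let S : Set Q := insert v (Set.range y)
  have hS : S.Finite := (Set.finite_range y).insert v
  let L := IntermediateField.adjoin P S
  have : FiniteDimensional P L := 
    have := hS.to_subtype
    IntermediateField.finiteDimensional_adjoin (fun x _ => Algebra.IsIntegral.isIntegral x)
  let y' : ι → L := fun i => ⟨y i, IntermediateField.subset_adjoin _ _ (Or.inr ⟨i, rfl⟩)⟩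
  let v' : L := ⟨v, IntermediateField.subset_adjoin _ _ (Or.inl rfl)⟩
  have hy' : ∀ i, y' i ≠ 0 := fun i hi => hy i (congrArg Subtype.val hi)
  have hlift : ∀ σ : L →ₐ[P] Q, ∃ f : Q →ₐ[P] Q, ∀ x : L, f (x : Q) = σ x := by
    intro σ
    obtain ⟨φ, hφ⟩ := IntermediateField.exists_algHom_of_splits
      (fun x : Q => ⟨Algebra.IsIntegral.isIntegral x, IsAlgClosed.splits _⟩) σ
    exact ⟨φ, fun x => DFunLike.congr_fun hφ x⟩
  choose F hF using hlift
  refine ⟨Module.finrank P L, fun i => Algebra.norm P (y' i), Algebra.trace P L v', Module.finrank_pos.ne', ?_, ?_, ?_⟩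
  · intro i
    exact Algebra.norm_ne_zero_iff.2 (hy' i)
  · apply (algebraMap P Q).injective
    rw [← hδ, trace_eq_sum_embeddings Q, map_sum, map_sum]
    have e1 : ∀ i, algebraMap P Q (c i * (δ (Algebra.norm P (y' i)) / Algebra.norm P (y' i))) = 
        ∑ σ : L →ₐ[P] Q, F σ (algebraMap P Q (c i) * (δ' (y i) / y i)) := by
      intro i
      rw [map_mul, map_div₀, ← hδ, Algebra.norm_eq_prod_embeddings P Q, der_prod_div, Finset.mul_sum]
      · refine Finset.sum_congr rfl fun σ _ => ?_
        rw [← hF σ (y' i), der_commute δ δ' hδ, map_mul, map_div₀, AlgHom.commutes]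
      · intro σ
        simpa using hy' i
    simp_rw [e1]
    rw [Finset.sum_comm]
    refine Finset.sum_congr rfl fun σ _ => ?_
    rw [← map_sum, h, ← hF, der_commute δ δ' hδ]
  · intro m p hp
    have : ∏ i, y' i ^ m i = algebraMap P L p := by
      apply Subtype.ext
      rw [← IntermediateField.algebraMap_apply, map_prod]
      simpa using hp
    have := congrArg (Algebra.norm P) this
    rw [Algebra.norm_algebraMap, map_prod] at this
    rw [← this]
    refine Finset.prod_congr rfl fun i _ => ?_
    refine (map_zpow' (Algebra.norm P) (fun x => ?_) (y' i) (m i)).symm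
    by_cases hx : x = 0
    · simp [hx]
    · exact eq_inv_of_mul_eq_one_left (by rw [← map_mul, inv_mul_cancel₀ hx, map_one])

universe u

theorem kaehler_apply {C K Q : Type*} [Field C] [Field K] [Field Q] [Algebra C K]
    (ψ : K →+* Q) (E : K →+ Q) (hE : ∀ a b, E (a * b) = ψ a * E b + ψ b * E a)
    (hC : ∀ c, E (algebraMap C K c) = 0) {ι : Type*} [Fintype ι] (c : ι → C) (y : ι → K) (v : K)
    (h : ∑ i, c i • (y i)⁻¹ • KaehlerDifferential.D C K (y i) = KaehlerDifferential.D C K v) :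
    ∑ i, ψ (algebraMap C K (c i)) * (E (y i) / ψ (y i)) = E v := by
  let : Algebra K Q := ψ.toAlgebra
  let : Algebra C Q := (ψ.comp (algebraMap C K)).toAlgebra
  have : IsScalarTower C K Q := IsScalarTower.of_algebraMap_eq (fun _ => rfl)
  have hψ : ∀ (a : K) (b : Q), a • b = ψ a * b := fun a b => Algebra.smul_def a b
  have hψ' : ∀ (a : C) (b : Q), a • b = ψ (algebraMap C K a) * b := fun a b => Algebra.smul_def a b
  let δ : Derivation C K Q := Derivation.mk'
    { toFun := E
      map_add' := E.map_add
      map_smul' := by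
        intro a b
        rw [Algebra.smul_def, hE, hC, RingHom.id_apply, hψ', mul_zero, add_zero] }
    (by intro a b; simp only [LinearMap.coe_mk, AddHom.coe_mk, hψ]; exact hE a b)
  have h2 := congrArg δ.liftKaehlerDifferential h
  rw [map_sum, Derivation.liftKaehlerDifferential_comp_D] at h2
  change _ = E v at h2
  rw [← h2]
  refine Finset.sum_congr rfl fun i _ => ?_
  rw [← algebraMap_smul K (c i), map_smul, map_smul, Derivation.liftKaehlerDifferential_comp_D, hψ, hψ, map_inv₀,
    div_eq_inv_mul]
  rfl

theorem lift_alg {R B K Q : Type*} [CommRing R] [IsDomain R] [Field K] [Field Q] [IsAlgClosed Q]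
    [CommRing B] [Algebra B K] [Algebra.IsAlgebraic B K]
    (hinj : Function.Injective (algebraMap B K))
    (f : R →+* K) (g : R →+* Q) (hf : Function.Injective f) (hg : Function.Injective g)
    (hB : ∀ b, algebraMap B K b ∈ f.range) : ∃ ψ : K →+* Q, ∀ r, ψ (f r) = g r := by
  let eq : R ≃+* f.range := RingEquiv.ofBijective f.rangeRestrict
    ⟨fun a b h => hf (congrArg Subtype.val h), f.rangeRestrict_surjective⟩
  let e : B →+* R := eq.symm.toRingHom.comp ((algebraMap B K).codRestrict f.range hB)
  have he : ∀ b, f (e b) = algebraMap B K b := fun b =>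
    congrArg Subtype.val (eq.apply_symm_apply ((algebraMap B K).codRestrict f.range hB b))
  have hei : Function.Injective e := fun a b h => hinj (by rw [← he, ← he, h])
  let i1 : Algebra R K := f.toAlgebra
  let i2 : Algebra R Q := g.toAlgebra
  have f1 : FaithfulSMul R K := (faithfulSMul_iff_algebraMap_injective _ _).2 hf
  have f2 : FaithfulSMul R Q := (faithfulSMul_iff_algebraMap_injective _ _).2 hg
  have alg : Algebra.IsAlgebraic R K := ⟨fun a =>
    (Algebra.IsAlgebraic.isAlgebraic (R := B) a).ringHom_of_comp_eq e (RingHom.id K) hei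
      (RingHom.ext fun b => he b)⟩
  let ψ : K →ₐ[R] Q := IsAlgClosed.lift
  exact ⟨ψ.toRingHom, fun r => ψ.commutes r⟩

theorem exists_place {C K : Type u} [Field C] [Field K] [CharZero K] [Algebra C K]
    (z : K) (hz : Transcendental C z) :
    ∃ (M : Type u) (_ : Field M) (_ : CharZero M) (κ : C →+* M) 
      (ψ : K →+* AlgebraicClosure (LaurentSeries M)),
      (∀ c, ψ (algebraMap C K c) = algebraMap (LaurentSeries M) _ (HahnSeries.C (κ c))) ∧
      ψ z = algebraMap (LaurentSeries M) _ (HahnSeries.single 1 1) := by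
  have hz1 : AlgebraicIndepOn C id ({z} : Set K) := by
    simpa [AlgebraicIndepOn] using (algebraicIndependent_singleton_iff (x := fun i : ({z} : Set K) => (i : K)) ⟨z, rfl⟩).2 hz
  obtain ⟨T, hzT, hT⟩ := exists_isTranscendenceBasis_superset hz1
  have hzT : z ∈ T := hzT rfl
  have halg := hT.isAlgebraic
  rw [Subtype.range_coe] at halg
  let A := Algebra.adjoin C (T \ {z})
  have hzA : Transcendental A z := by
    have := hT.1.transcendental_adjoin (s := {i | (i : K) ≠ z}) (i := ⟨z, hzT⟩) (by simp)
    have hs : ((fun i : T => (i : K)) '' {i | (i : K) ≠ z}) = T \ {z} := by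
      ext w; simp [and_comm]
    rw [hs] at this
    exact this
  let M := FractionRing A
  let P := LaurentSeries M
  let φ : Polynomial A →+* P := ((HahnSeries.ofPowerSeries ℤ M).comp Polynomial.coeToPowerSeries.ringHom).comp (Polynomial.mapRingHom (algebraMap A M))
  have hφ : Function.Injective φ := by
    refine HahnSeries.ofPowerSeries_injective.comp (Function.Injective.comp ?_ ?_)
    · exact Polynomial.coe_injective M
    · exact Polynomial.map_injective _ (IsFractionRing.injective A M)
  obtain ⟨ψ, hψ⟩ := lift_alg (B := Algebra.adjoin C T) (K := K) (Q := AlgebraicClosure P)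
    Subtype.val_injective (Polynomial.aeval (R := A) z).toRingHom ((algebraMap P (AlgebraicClosure P)).comp φ)
    (transcendental_iff_injective.1 hzA) ((algebraMap P (AlgebraicClosure P)).injective.comp hφ) (by
      rintro ⟨b, hb⟩
      change b ∈ _
      induction hb using Algebra.adjoin_induction with
      | mem x hx =>
        by_cases hxz : x = z
        · exact ⟨Polynomial.X, by simp [hxz]⟩
        · exact ⟨Polynomial.C ⟨x, Algebra.subset_adjoin ⟨hx, hxz⟩⟩, by simp⟩
      | algebraMap r => exact ⟨Polynomial.C (algebraMap C A r), by simp⟩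
      | add x y _ _ hx hy => exact add_mem hx hy
      | mul x y _ _ hx hy => exact mul_mem hx hy)
  have hcz : CharZero A := ⟨fun a b h => Nat.cast_injective (R := K)
    (by simpa using congrArg (algebraMap A K) h)⟩
  refine ⟨M, inferInstance, charZero_of_injective_algebraMap (IsFractionRing.injective A M),
    (algebraMap A M).comp (algebraMap C A), ψ, ?_, ?_⟩
  · intro c
    have := hψ (Polynomial.C (algebraMap C A c))
    simpa [φ] using this
  · have := hψ Polynomial.X
    simpa [φ] using this

theorem kaehler_apply_der {C K Q : Type*} [Field C] [Field K] [Field Q] [Algebra C K]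
    (ψ : K →+* Q) (δ : Derivation ℤ Q Q)
    (hC : ∀ c, δ (ψ (algebraMap C K c)) = 0) {ι : Type*} [Fintype ι] (c : ι → C) (y : ι → K) (v : K)
    (h : ∑ i, c i • (y i)⁻¹ • KaehlerDifferential.D C K (y i) = KaehlerDifferential.D C K v) :
    ∑ i, ψ (algebraMap C K (c i)) * (δ (ψ (y i)) / ψ (y i)) = δ (ψ v) :=
  kaehler_apply ψ (AddMonoidHom.mk' (fun a => δ (ψ a)) (fun a b => by rw [map_add, map_add]))
    (by
      intro a b
      change δ (ψ (a * b)) = ψ a * δ (ψ b) + ψ b * δ (ψ a)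
      rw [map_mul, Derivation.leibniz]; rfl)
    hC c y v h

theorem laurent_order_zpow {M : Type*} [Field M] (f : LaurentSeries M) (hf : f ≠ 0) (n : ℤ) :
    (f ^ n).order = n * f.order := by
  have hpow : ∀ k : ℕ, (f ^ k).order = k * f.order := by
    intro k
    induction k with
    | zero => simp
    | succ k ih => rw [pow_succ, HahnSeries.order_mul (pow_ne_zero _ hf) hf, ih]; push_cast; ring
  obtain ⟨k, rfl | rfl⟩ := n.eq_nat_or_neg
  · simp
  · have h1 : (f ^ (-(k : ℤ)) * f ^ k).order = 0 := by
      rw [zpow_neg, zpow_natCast, inv_mul_cancel₀ (pow_ne_zero _ hf), HahnSeries.order_one]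
    rw [HahnSeries.order_mul (zpow_ne_zero _ hf) (pow_ne_zero _ hf), hpow] at h1
    linarith

theorem laurent_order_prod {M ι : Type*} [Field M] (s : Finset ι) (f : ι → LaurentSeries M)
    (hf : ∀ i, f i ≠ 0) : (∏ i ∈ s, f i).order = ∑ i ∈ s, (f i).order := by
  classical
  induction s using Finset.induction_on with
  | empty => simp
  | insert a s ha ih =>
    rw [Finset.prod_insert ha, Finset.sum_insert ha, HahnSeries.order_mul (hf a)
      (Finset.prod_ne_zero_iff.2 fun i _ => hf i), ih]

theorem residue_lemma {C K : Type u} [Field C] [Field K] [CharZero K] [Algebra C K]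
    {ι : Type*} [Fintype ι] (c : ι → C) (y : ι → K) (hy : ∀ i, y i ≠ 0) (v : K)
    (h : ∑ i, c i • (y i)⁻¹ • KaehlerDifferential.D C K (y i) = KaehlerDifferential.D C K v)
    (m : ι → ℤ) (hz : Transcendental C (∏ i, y i ^ m i)) :
    ∃ a : ι → ℤ, ∑ i, c i * (a i : C) = 0 ∧ ∑ i, m i * a i ≠ 0 := by
  obtain ⟨M, _, _, κ, ψ, hψC, hψz⟩ := exists_place _ hz
  have hcz : CharZero (LaurentSeries M) := 
    charZero_of_injective_algebraMap (algebraMap M (LaurentSeries M)).injective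
  obtain ⟨δ', hδ'⟩ := exists_extend_der (LaurentSeries M) (AlgebraicClosure (LaurentSeries M)) (eulerDer M)
  have hδC : ∀ a : M, eulerDer M (HahnSeries.C a) = 0 := by
    intro a
    ext n
    rw [eulerDer_coeff]
    by_cases hn : n = 0
    · simp [hn]
    · rw [HahnSeries.C_apply, HahnSeries.coeff_single_of_ne hn, mul_zero]; rfl
  have h1 := kaehler_apply_der ψ δ' (fun a => by rw [hψC, hδ', hδC, map_zero]) c y v h
  simp only [hψC] at h1
  obtain ⟨k, N, w, hk, hN, hsum, hprod⟩ := norm_trace (eulerDer M) δ' hδ' (fun i => HahnSeries.C (κ (c i)))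
    (fun i => ψ (y i)) (fun i => by simpa using hy i) (ψ v) h1
  refine ⟨fun i => (N i).order, ?_, ?_⟩
  · apply κ.injective
    have h2 := congrArg (fun g => HahnSeries.coeff g 0) hsum
    simp only [HahnSeries.coeff_sum] at h2
    rw [eulerDer_coeff, Int.cast_zero, zero_mul] at h2
    rw [map_zero, ← h2, map_sum]
    refine Finset.sum_congr rfl fun i _ => ?_
    rw [HahnSeries.C_apply, HahnSeries.coeff_single_zero_mul, 
      eulerDer_res (N i) (eulerDer M (N i) / N i) (hN i) (div_mul_cancel₀ _ (hN i)).symm]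
    simp
  · have h3 := hprod m (HahnSeries.single 1 1) (by rw [← hψz, map_prod]; simp)
    have h4 := congrArg HahnSeries.order h3
    rw [laurent_order_prod _ _ (fun i => zpow_ne_zero _ (hN i)), ← zpow_natCast,
      laurent_order_zpow _ (by simp), HahnSeries.order_single one_ne_zero] at h4
    simp_rw [laurent_order_zpow _ (hN _)] at h4
    rw [h4]
    simpa using hk

theorem der_eq_zero_of_isAlgebraic {F K V : Type*} [Field F] [Field K] [CharZero K] [Algebra F K]
    [AddCommGroup V] [Module F V] [Module K V] [IsScalarTower F K V] (δ : Derivation F K V) (a : K)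
    (ha : IsAlgebraic F a) : δ a = 0 := by
  have hF : CharZero F := ⟨fun m n h => Nat.cast_injective (R := K)
    (by simpa using congrArg (algebraMap F K) h)⟩
  have hs := (minpoly.irreducible ha.isIntegral).separable
  have h1 := hs.aeval_derivative_ne_zero (minpoly.aeval F a)
  have h2 := δ.map_aeval (minpoly F a) a
  rw [minpoly.aeval, map_zero] at h2
  exact (smul_eq_zero.1 h2.symm).resolve_left h1

theorem der_eq_zero_of_isAlgebraic_adjoin {C K V : Type*} [Field C] [Field K] [CharZero K]
    [Algebra C K] [AddCommGroup V] [Module C V] [Module K V] [IsScalarTower C K V]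
    (δ : Derivation C K V) (t : Set K) (ht : ∀ a ∈ t, δ a = 0) (a : K)
    (ha : IsAlgebraic (Algebra.adjoin C t) a) : δ a = 0 := by
  let F := IntermediateField.adjoin C t
  have hF : ∀ b ∈ F, δ b = 0 := by
    intro b hb
    induction hb using IntermediateField.adjoin_induction with
    | mem x hx => exact ht x hx
    | algebraMap x => simp
    | add x y _ _ hx hy => simp [hx, hy]
    | inv x _ hx => simp [Derivation.leibniz_inv, hx]
    | mul x y _ _ hx hy => simp [hx, hy]
  have haF : IsAlgebraic F a := by
    have hle : Algebra.adjoin C t ≤ F.toSubalgebra := IntermediateField.algebra_adjoin_le_adjoin C t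
    exact ha.ringHom_of_comp_eq (Subalgebra.inclusion hle).toRingHom (RingHom.id K)
      (Subalgebra.inclusion_injective hle) rfl
  let δ' : Derivation F K V := Derivation.mk'
    { toFun := δ
      map_add' := δ.map_add
      map_smul' := by
        intro b x
        have hb : δ (algebraMap F K b) = 0 := hF _ b.2
        rw [Algebra.smul_def, Derivation.leibniz, hb, smul_zero, add_zero]
        rfl }
    (fun x y => δ.leibniz x y)
  exact der_eq_zero_of_isAlgebraic δ' a haF

open KaehlerDifferential in
theorem relation_deriv {C K : Type*} [Field C] [Field K] [Algebra C K]
    (D : Derivation C K K) {ι : Type*} [Fintype ι] (x y : ι → K) (hy : ∀ i, y i ≠ 0)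
    (hsol : ∀ i, D (y i) = y i * D (x i)) (g : ι → K)
    (hg : ∑ i, g i • ((y i)⁻¹ • KaehlerDifferential.D C K (y i) - KaehlerDifferential.D C K (x i)) = 0) :
    ∑ i, D (g i) • ((y i)⁻¹ • KaehlerDifferential.D C K (y i) - KaehlerDifferential.D C K (x i)) = 0 := by
  have key : ∀ E : Derivation C K K, ∑ i, g i * ((y i)⁻¹ * E (y i) - E (x i)) = 0 := by
    intro E
    simpa using congrArg E.liftKaehlerDifferential hg
  rw [← Module.forall_dual_apply_eq_zero_iff K]
  intro φ
  let E : Derivation C K K := φ.compDer (KaehlerDifferential.D C K)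
  have hE : ∀ a, φ (KaehlerDifferential.D C K a) = E a := fun a => rfl
  simp only [map_sum, map_smul, map_sub, hE, smul_eq_mul]
  have h1 := congrArg D (key E)
  have h2 := key ⁅D, E⁆
  rw [map_sum, map_zero] at h1
  have h3 : ∑ i, D (g i) * ((y i)⁻¹ * E (y i) - E (x i)) =
      (∑ i, D (g i * ((y i)⁻¹ * E (y i) - E (x i)))) -
        ∑ i, g i * ((y i)⁻¹ * ⁅D, E⁆ (y i) - ⁅D, E⁆ (x i)) := by
    rw [← Finset.sum_sub_distrib]
    refine Finset.sum_congr rfl fun i _ => ?_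
    have hyi := hy i
    have e1 : E (y i * D (x i)) = E (y i) * D (x i) + y i * E (D (x i)) := by
      rw [Derivation.leibniz]; simp only [smul_eq_mul]; ring
    simp only [Derivation.commutator_apply, hsol, e1]
    simp only [Derivation.leibniz, Derivation.map_sub, Derivation.leibniz_inv,
      smul_eq_mul, hsol]
    field_simp
    ring
  rw [h3, h1, h2, sub_zero]

open Classical in
theorem exists_const_relation {C K V : Type*} [Field C] [Field K] [Algebra C K] [AddCommGroup V] [Module K V]
    (D : Derivation C K K) (hD : ∀ a, D a = 0 → ∃ c, algebraMap C K c = a)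
    {ι : Type*} [Fintype ι] (ω : ι → V)
    (hω : ∀ g : ι → K, ∑ i, g i • ω i = 0 → ∑ i, D (g i) • ω i = 0) (n : ℕ) :
    ∀ (g : ι → K) , (Finset.univ.filter fun i => g i ≠ 0).card = n → ∑ i, g i • ω i = 0 → (∃ i, g i ≠ 0) →
    ∃ c : ι → C, ∑ i, algebraMap C K (c i) • ω i = 0 ∧ ∃ i, c i ≠ 0 := by
  induction n using Nat.strong_induction_on with
  | _ n ih =>
  intro g hn hg ⟨j, hj⟩
  let g' : ι → K := fun i => (g j)⁻¹ * g i
  have hg' : ∑ i, g' i • ω i = 0 := by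
    simp only [g', mul_smul, ← Finset.smul_sum, hg, smul_zero]
  have hg'j : g' j = 1 := inv_mul_cancel₀ hj
  by_cases hc : ∀ i, D (g' i) = 0
  · choose c hc using fun i => hD _ (hc i)
    refine ⟨c, by simpa [hc] using hg', j, fun h => ?_⟩
    have := hc j
    rw [h, hg'j] at this
    simp at this
  · push Not at hc
    refine ih _ ?_ (fun i => D (g' i)) rfl (hω g' hg') hc
    rw [← hn]
    apply Finset.card_lt_card
    refine Finset.ssubset_iff_of_subset ?_ |>.2 ⟨j, by simpa using hj, by simp [hg'j]⟩
    intro i hi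
    simp only [Finset.mem_filter, Finset.mem_univ, true_and] at hi ⊢
    intro h0
    apply hi
    simp [g', h0]

theorem der_prod_zpow {C K : Type*} [Field C] [Field K] [CharZero K] [Algebra C K]
    (D : Derivation C K K) {ι : Type*} (x y : ι → K) (hy : ∀ i, y i ≠ 0)
    (hsol : ∀ i, D (y i) = y i * D (x i)) (m : ι → ℤ) (s : Finset ι) :
    D (∏ i ∈ s, y i ^ m i) = (∏ i ∈ s, y i ^ m i) * ∑ i ∈ s, (m i : ℚ) • D (x i) := by
  classical
  induction s using Finset.induction_on with
  | empty => simp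
  | insert a s ha ih =>
    have hya := hy a
    rw [Finset.prod_insert ha, Finset.sum_insert ha, Derivation.leibniz, ih, Derivation.leibniz_zpow,
      hsol, zpow_sub_one₀ hya, Algebra.smul_def (m a : ℚ)]
    simp only [smul_eq_mul, zsmul_eq_mul, map_intCast]
    field_simp
    ring

theorem omega_linearIndependent {C K : Type u} [Field C] [Field K] [CharZero K] [Algebra C K]
    (D : Derivation C K K) (hD : ∀ a, D a = 0 → ∃ c, algebraMap C K c = a)
    {ι : Type*} [Fintype ι] (x y : ι → K) (hy : ∀ i, y i ≠ 0)
    (hsol : ∀ i, D (y i) = y i * D (x i)) (hx : LinearIndependent ℚ (fun i => D (x i))) :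
    LinearIndependent K
      (fun i => (y i)⁻¹ • KaehlerDifferential.D C K (y i) - KaehlerDifferential.D C K (x i)) := by
  classical
  by_contra hli
  rw [Fintype.not_linearIndependent_iff] at hli
  obtain ⟨g, hg, hg0⟩ := hli
  obtain ⟨c, hc, j, hj⟩ := exists_const_relation D hD _
    (fun g hg => relation_deriv D x y hy hsol g hg) _ g rfl hg hg0
  have hC : CharZero C := ⟨fun m n h => Nat.cast_injective (R := K)
    (by simpa using congrArg (algebraMap C K) h)⟩
  -- a rational functional not vanishing at `c j`
  obtain ⟨l, hl⟩ : ∃ l : Module.Dual ℚ C, l (c j) ≠ 0 := by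
    by_contra hcon
    push Not at hcon
    exact hj ((Module.forall_dual_apply_eq_zero_iff ℚ (c j)).1 hcon)
  obtain ⟨b, hb0, m, hm⟩ : ∃ b : ℤ, b ≠ 0 ∧ ∃ m : ι → ℤ, ∀ i, (m i : ℚ) = b * l (c i) := by
    obtain ⟨⟨b, hb⟩, h⟩ := IsLocalization.exist_integer_multiples_of_finite (nonZeroDivisors ℤ) (fun i => l (c i))
    choose m hm using h
    exact ⟨b, nonZeroDivisors.ne_zero hb, m, fun i => by simpa using hm i⟩
  have hmj : m j ≠ 0 := by
    intro h0
    have := hm j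
    rw [h0] at this
    simp [hb0, hl] at this
  have hDz : D (∏ i, y i ^ m i) = (∏ i, y i ^ m i) * ∑ i, (m i : ℚ) • D (x i) :=
    der_prod_zpow D x y hy hsol m Finset.univ
  have hz : Transcendental C (∏ i, y i ^ m i) := by
    intro halg
    have h0 := der_eq_zero_of_isAlgebraic D _ halg
    rw [hDz, mul_eq_zero] at h0
    have h1 := h0.resolve_left (Finset.prod_ne_zero_iff.2 fun i _ => zpow_ne_zero _ (hy i))
    have := Fintype.linearIndependent_iff.1 hx _ h1 j
    exact hmj (by exact_mod_cast this)
  obtain ⟨a, ha, ha'⟩ := residue_lemma c y hy (∑ i, algebraMap C K (c i) * x i) (by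
    rw [← sub_eq_zero, map_sum, ← Finset.sum_sub_distrib, ← hc]
    refine Finset.sum_congr rfl fun i _ => ?_
    rw [smul_sub, ← Algebra.smul_def, Derivation.map_smul, algebraMap_smul, algebraMap_smul]) m hz
  apply ha'
  have h1 := congrArg l ha
  have h2 : ∀ i, c i * (a i : C) = (a i : ℚ) • c i := by
    intro i
    rw [mul_comm, Algebra.smul_def]; simp
  simp only [h2, map_sum, map_smul, map_zero] at h1
  have : ((∑ i, m i * a i : ℤ) : ℚ) = 0 := by
    push_cast
    have := congrArg (fun q => (b : ℚ) * q) h1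
    simp only [Finset.mul_sum, mul_zero] at this
    rw [← this]
    refine Finset.sum_congr rfl fun i _ => ?_
    rw [hm, smul_eq_mul]; ring
  exact_mod_cast this

theorem card_le_of_omega {C K : Type u} [Field C] [Field K] [CharZero K] [Algebra C K]
    (D : Derivation C K K) (hD : ∀ a, D a = 0 → ∃ c, algebraMap C K c = a)
    {ι : Type*} [Fintype ι] (x y : ι → K) (hy : ∀ i, y i ≠ 0)
    (hsol : ∀ i, D (y i) = y i * D (x i)) (hx : LinearIndependent ℚ (fun i => D (x i)))
    (x0 : K) (hx0 : D x0 ≠ 0) (t : Set K) (ht : t.Finite)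
    (hxt : ∀ i, IsAlgebraic (Algebra.adjoin C t) (x i))
    (hyt : ∀ i, IsAlgebraic (Algebra.adjoin C t) (y i))
    (hx0t : IsAlgebraic (Algebra.adjoin C t) x0) :
    Fintype.card ι + 1 ≤ t.ncard := by
  classical
  let W : Submodule K (Ω[K⁄C]) := Submodule.span K (KaehlerDifferential.D C K '' t)
  have hfin : (KaehlerDifferential.D C K '' t).Finite := ht.image _
  have hWfd : Module.Finite K W := Module.Finite.span_of_finite K hfin
  have hW1 : Module.finrank K W ≤ t.ncard := by
    have := hfin.fintype
    refine (finrank_span_le_card (R := K) (KaehlerDifferential.D C K '' t)).trans ?_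
    rw [← Set.ncard_eq_toFinset_card']
    exact Set.ncard_image_le ht
  have hW : ∀ a, IsAlgebraic (Algebra.adjoin C t) a → KaehlerDifferential.D C K a ∈ W := by
    intro a ha
    have h := der_eq_zero_of_isAlgebraic_adjoin (W.mkQ.compDer (KaehlerDifferential.D C K)) t
      (fun b hb => (Submodule.Quotient.mk_eq_zero W).2 (Submodule.subset_span ⟨b, hb, rfl⟩)) a ha
    exact (Submodule.Quotient.mk_eq_zero W).1 h
  have hω := omega_linearIndependent D hD x y hy hsol hx
  have hli := linearIndependent_option'.2 ⟨hω, (?_ : KaehlerDifferential.D C K x0 ∉ _)⟩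
  · have hmem : ∀ o : Option ι, Option.casesOn' o (KaehlerDifferential.D C K x0)
        (fun i => (y i)⁻¹ • KaehlerDifferential.D C K (y i) - KaehlerDifferential.D C K (x i)) ∈ W := by
      rintro (_ | i)
      · exact hW _ hx0t
      · exact W.sub_mem (W.smul_mem _ (hW _ (hyt i))) (hW _ (hxt i))
    have hli' : LinearIndependent K (fun o : Option ι => (⟨_, hmem o⟩ : W)) :=
      LinearIndependent.of_comp W.subtype hli
    have := hli'.fintype_card_le_finrank
    rw [Fintype.card_option] at this
    exact this.trans hW1
  · intro hmem
    have hle : Submodule.span K (Set.range fun i =>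
        (y i)⁻¹ • KaehlerDifferential.D C K (y i) - KaehlerDifferential.D C K (x i)) ≤
        LinearMap.ker D.liftKaehlerDifferential := by
      rw [Submodule.span_le]
      rintro _ ⟨i, rfl⟩
      simp [hsol, hy]
    have := hle hmem
    rw [LinearMap.mem_ker, Derivation.liftKaehlerDifferential_comp_D] at this
    exact hx0 this

/-- **Ax–Schanuel** for the exponential differential equation.
If `(xᵢ, yᵢ)`, `i = 1, …, n`, are non-constant solutions of `D y = y · D x` in a
differential field `K` of characteristic zero with field of constants `C`, then
`td_C C(x̄, ȳ) ≥ d + 1`, where `d` is the dimension of the `ℚ`-linear span of the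
images of `x₁, …, xₙ` in the quotient `ℚ`-vector space `K/C`. -/
theorem ax_schanuel_exponential {K : Type*} [Field K] [CharZero K]
    (D : Derivation ℚ K K)
    (C : Subfield K) (hC : (C : Set K) = {a : K | D a = 0})
    (n : ℕ) (hn : 1 ≤ n) (x y : Fin n → K)
    (hsol : ∀ i, D (y i) = y i * D (x i))
    (hy : ∀ i, y i ≠ 0) (hx : ∀ i, D (x i) ≠ 0)
    (d : ℕ)
    (hd : d = Module.finrank ℚ (Submodule.span ℚ (Set.range
      (fun i => (Submodule.Quotient.mk (x i) : K ⧸ LinearMap.ker D.toLinearMap))))) :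
    (d + 1 : Cardinal) ≤ Subfield.trdeg C (C.extend (Set.range x ∪ Set.range y)) := by
  have hC' : ∀ a : K, a ∈ C ↔ D a = 0 := fun a => by
    have h : a ∈ (C : Set K) ↔ a ∈ {a : K | D a = 0} := by rw [hC]
    exact h
  let D' : Derivation C K K := Derivation.mk'
    { toFun := D
      map_add' := D.map_add
      map_smul' := by
        intro b z
        have hb : D (b : K) = 0 := (hC' _).1 b.2
        change D ((b : K) * z) = (b : K) * D z
        rw [Derivation.leibniz, hb, smul_zero, add_zero, smul_eq_mul] }
    (fun a b => D.leibniz a b)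
  have hD' : ∀ a, D' a = D a := fun a => rfl
  obtain ⟨κ, a, ha, hspan, hli⟩ := exists_linearIndependent' ℚ
    (fun i => (Submodule.Quotient.mk (x i) : K ⧸ LinearMap.ker D.toLinearMap))
  have hκ : Fintype κ := Fintype.ofInjective a ha
  have hdκ : d = Fintype.card κ := by
    rw [hd, ← hspan, finrank_span_eq_card hli]
  have hDli : LinearIndependent ℚ (fun j => D' (x (a j))) := by
    have := hli.map' ((LinearMap.ker D.toLinearMap).liftQ D.toLinearMap le_rfl)
      (Submodule.ker_liftQ_eq_bot _ _ _ le_rfl)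
    exact this
  let S : Set K := Set.range x ∪ Set.range y
  have hS : S.Finite := (Set.finite_range x).union (Set.finite_range y)
  have hempty : AlgebraicIndepOn C id (∅ : Set K) :=
    algebraicIndependent_empty_iff C K |>.2 (algebraMap C K).injective
  obtain ⟨t, -, ht⟩ := exists_maximal_algebraicIndependent ∅ S (Set.empty_subset _) hempty
  have halg : ∀ b ∈ S, IsAlgebraic (Algebra.adjoin C t) b := by
    intro b hb
    by_contra hcon
    have h1 : AlgebraicIndepOn C id (insert b t) :=
      AlgebraicIndepOn.insert ht.prop.1 (by rw [Set.image_id]; exact hcon)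
    have h2 : b ∈ t := ht.le_of_ge ⟨h1, Set.insert_subset hb ht.prop.2⟩ (Set.subset_insert _ _)
      (Set.mem_insert _ _)
    exact hcon (isAlgebraic_algebraMap (⟨b, Algebra.subset_adjoin h2⟩ : Algebra.adjoin C t))
  have htfin : t.Finite := hS.subset ht.prop.2
  have hcard := card_le_of_omega D' (fun b hb => ⟨⟨b, (hC' b).2 hb⟩, rfl⟩)
    (fun j => x (a j)) (fun j => y (a j)) (fun j => hy _) (fun j => hsol _) hDli
    (x ⟨0, hn⟩) (hx _) t htfin
    (fun j => halg _ (Or.inl ⟨_, rfl⟩)) (fun j => halg _ (Or.inr ⟨_, rfl⟩)) (halg _ (Or.inl ⟨_, rfl⟩))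
  rw [← hdκ] at hcard
  have hsub : t ⊆ (C.extend (Set.range x ∪ Set.range y) : Set K) := fun b hb =>
    Subfield.subset_closure (Or.inr (ht.prop.2 hb))
  have hle : Cardinal.mk t ≤ Subfield.trdeg C (C.extend (Set.range x ∪ Set.range y)) :=
    le_ciSup (f := fun t : {t : Set K // t ⊆ (C.extend (Set.range x ∪ Set.range y) : Set K) ∧
      AlgebraicIndependent C ((↑) : t → K)} => Cardinal.mk t.1)
      Cardinal.bddAbove_of_small ⟨t, hsub, ht.prop.1⟩
  refine le_trans ?_ hle
  rw [← Set.cast_ncard htfin]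
  exact_mod_cast hcard
end

section
/- Let K be an algebraically closed field of characteristic zero, A ⊆ K a subfield, N ≥ 1, and v̄ = (v₁,…,v_N) ∈ K^N. Let p̄ = (p₁,…,p_N) ∈ K^N satisfy Σᵢ pᵢ·vᵢ = 1 and trdeg_{A(v̄)}(p̄) = N − 1 (so p̄ is a generic point over A(v̄) of the hyperplane Π_{v̄}). Then for every finite tuple w̄ from K all of whose entries are algebraic over A(v̄), either every entry of v̄ is algebraic over A(w̄), or trdeg_{A(p̄)}(w̄) = trdeg_A(w̄). -/
/-- The transcendence degree over a subfield `F` of the subfield generated by `F`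
and the entries of a tuple `w`. -/
noncomputable def Subfield.trdegTuple {K : Type*} [Field K] (F : Subfield K)
    {m : ℕ} (w : Fin m → K) : Cardinal :=
  Subfield.trdeg F (F.extend (Set.range w))

namespace GHL
open AlgebraicIndependent Cardinal

variable {K : Type*} [Field K]

theorem extend_eq (F : Subfield K) (s : Set K) :
    F.extend s = (IntermediateField.adjoin F s).toSubfield := by
  rw [IntermediateField.adjoin_toSubfield, Subfield.extend]
  congr 2
  ext x
  exact ⟨fun h => ⟨⟨x, h⟩, rfl⟩, by rintro ⟨y, rfl⟩; exact y.2⟩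

theorem isAlgebraic_extend_iff (F : Subfield K) (s : Set K) (x : K) :
    IsAlgebraic (F.extend s) x ↔ IsAlgebraic (Algebra.adjoin F s) x := by
  rw [extend_eq, ← IntermediateField.isAlgebraic_adjoin_iff (E := K)]
  exact Iff.rfl

theorem algInd_extend_iff (F : Subfield K) (s : Set K) {ι : Type*} (x : ι → K) :
    AlgebraicIndependent (F.extend s) x ↔ AlgebraicIndependent (Algebra.adjoin F s) x := by
  rw [extend_eq, ← IntermediateField.algebraicIndependent_adjoin_iff (E := K)]
  exact Iff.rfl

theorem mem_closure_iff (F : Subfield K) (s : Set K) (x : K) :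
    x ∈ (matroid F K).closure s ↔ IsAlgebraic (F.extend s) x := by
  rw [isAlgebraic_extend_iff, matroid_closure_eq]
  exact Iff.rfl

theorem extend_mono (F : Subfield K) {s : Set K} {E : Subfield K} (h : F ≤ E)
    (hs : s ⊆ E) : F.extend s ≤ E :=
  (Subfield.closure_le).2 (Set.union_subset h hs)

theorem le_extend (F : Subfield K) (s : Set K) : F ≤ F.extend s := fun _ hx =>
  Subfield.subset_closure (Or.inl hx)

theorem subset_extend (F : Subfield K) (s : Set K) : s ⊆ F.extend s := fun _ hx =>
  Subfield.subset_closure (Or.inr hx)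

theorem isAlgebraic_mono {F E : Subfield K} (h : F ≤ E) {x : K} (hx : IsAlgebraic F x) :
    IsAlgebraic E x := by
  let _ : Algebra F E := (Subfield.inclusion h).toAlgebra
  have : IsScalarTower F E K := .of_algebraMap_eq fun _ => rfl
  exact hx.tower_top E

theorem algInd_anti {F E : Subfield K} (h : F ≤ E) {ι : Type*} {x : ι → K}
    (hx : AlgebraicIndependent E x) : AlgebraicIndependent F x := by
  let _ : Algebra F E := (Subfield.inclusion h).toAlgebra
  have : IsScalarTower F E K := .of_algebraMap_eq fun _ => rfl
  exact hx.restrictScalars (algebraMap F E).injective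

theorem isAlgebraic_mem {F : Subfield K} {x : K} (hx : x ∈ F) : IsAlgebraic F x :=
  isAlgebraic_algebraMap (⟨x, hx⟩ : F)

theorem trdeg_eq_cRk (F E : Subfield K) : F.trdeg E = (matroid F K).cRk E := by
  apply le_antisymm
  · refine ciSup_le' fun t => ?_
    exact (matroid_indep_iff.2 t.2.2).cardinalMk_le_cRk_of_subset t.2.1
  · rw [Matroid.cRk_le_iff]
    intro I hI
    exact le_ciSup (f := fun t : {t : Set K // t ⊆ (E : Set K) ∧
      AlgebraicIndependent F ((↑) : t → K)} => #t.1)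
      (bddAbove_of_small) ⟨I, hI.subset, matroid_indep_iff.1 hI.indep⟩

theorem trdegTuple_eq (F : Subfield K) {m : ℕ} (w : Fin m → K) :
    F.trdegTuple w = (matroid F K).cRk (Set.range w) := by
  rw [Subfield.trdegTuple, trdeg_eq_cRk]
  apply le_antisymm
  · rw [← Matroid.cRk_closure _ (Set.range w)]
    refine Matroid.cRk_le_of_subset _ fun x hx => ?_
    rw [mem_closure_iff]
    exact isAlgebraic_mem hx
  · exact Matroid.cRk_le_of_subset _ (subset_extend _ _)

/-- If `p` is independent over `A(w)`, the transcendence degrees agree. -/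
theorem trdeg_eq_of_indep (A : Subfield K) {N m : ℕ} (p : Fin N → K) (w : Fin m → K)
    (h : AlgebraicIndependent (A.extend (Set.range w)) p) :
    (A.extend (Set.range p)).trdegTuple w = A.trdegTuple w := by
  rw [trdegTuple_eq, trdegTuple_eq]
  obtain ⟨B, hB⟩ := (matroid A K).exists_isBasis (Set.range w)
  apply le_antisymm
  · rw [← hB.cardinalMk_eq_cRk]
    refine le_trans ?_ (Matroid.cRk_le_cardinalMk (matroid (A.extend (Set.range p)) K) B)
    rw [← Matroid.cRk_closure _ B]
    refine Matroid.cRk_le_of_subset _ fun x hx => ?_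
    have h1 : x ∈ (matroid A K).closure B := hB.subset_closure hx
    rw [mem_closure_iff] at h1 ⊢
    exact isAlgebraic_mono (extend_mono _ ((le_extend _ _).trans (le_extend _ _))
      (subset_extend _ _)) h1
  · rw [← hB.cardinalMk_eq_cRk]
    refine Matroid.Indep.cardinalMk_le_cRk_of_subset ?_ hB.subset
    have hBi : AlgebraicIndependent A ((↑) : B → K) := matroid_indep_iff.1 hB.indep
    have hp : AlgebraicIndependent (A.extend B) p :=
      algInd_anti (extend_mono _ (le_extend _ _) (hB.subset.trans (subset_extend _ _))) h
    rw [algInd_extend_iff] at hp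
    have h2 : AlgebraicIndependent A (Sum.elim p ((↑) : B → K)) :=
      sumElim_iff.2 ⟨hBi, by rwa [Subtype.range_coe]⟩
    have h3 : AlgebraicIndependent A (Sum.elim ((↑) : B → K) p) := by
      have := h2.comp Sum.swap Sum.swap_leftInverse.injective
      convert this using 1
      ext (_ | _) <;> rfl
    rw [matroid_indep_iff]
    exact (algInd_extend_iff _ _ _).2 (sumElim_iff.1 h3).2

theorem coord_eq {N : ℕ} {v q : Fin N → K} (i₀ : Fin N) (hv : v i₀ ≠ 0)
    (hq : ∑ i, q i * v i = 1) :
    q i₀ = (v i₀)⁻¹ * (1 - ∑ i : {i // i ≠ i₀}, v i * q i) := by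
  have h : ∑ i, q i * v i = q i₀ * v i₀ + ∑ i : {i // i ≠ i₀}, q i * v i :=
    Fintype.sum_eq_add_sum_subtype_ne (fun i => q i * v i) i₀
  rw [hq] at h
  simp_rw [mul_comm (v _) (q _)]
  rw [h]
  field_simp
  ring

/-- All coordinates but one of a generic point of the hyperplane are independent. -/
theorem indep_coords (F : Subfield K) {N : ℕ} {v p : Fin N → K} (hvF : ∀ i, v i ∈ F)
    (i₀ : Fin N) (hv : v i₀ ≠ 0) (hp : ∑ i, p i * v i = 1)
    (hgen : F.trdegTuple p = ((N - 1 : ℕ) : Cardinal)) :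
    AlgebraicIndependent F (fun i : {i // i ≠ i₀} => p i) := by
  set p' : {i // i ≠ i₀} → K := fun i => p i with hp'
  rw [trdegTuple_eq] at hgen
  have hmem : ∀ i : {i // i ≠ i₀}, p i ∈ F.extend (Set.range p') := fun i =>
    subset_extend _ _ ⟨i, rfl⟩
  have hle : ((N - 1 : ℕ) : Cardinal) ≤ (matroid F K).cRk (Set.range p') := by
    rw [← hgen, ← Matroid.cRk_closure _ (Set.range p')]
    refine Matroid.cRk_le_of_subset _ ?_
    rintro _ ⟨i, rfl⟩
    rw [mem_closure_iff]
    apply isAlgebraic_mem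
    by_cases hi : i = i₀
    · subst hi
      rw [coord_eq i hv hp]
      exact mul_mem (inv_mem (le_extend _ _ (hvF _))) (sub_mem (one_mem _)
        (sum_mem fun j _ => mul_mem (le_extend _ _ (hvF _)) (hmem j)))
    · exact hmem ⟨i, hi⟩
  have hcard : Fintype.card {i // i ≠ i₀} = N - 1 := by simp
  obtain ⟨B, hB⟩ := (matroid F K).exists_isBasis (Set.range p')
  rw [← hB.cardinalMk_eq_cRk] at hle
  have hfin : (Set.range p').Finite := Set.finite_range p'
  have hBfin : B.Finite := hfin.subset hB.subset
  have hBn : N - 1 ≤ B.ncard := by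
    rw [← Set.cast_ncard hBfin] at hle
    exact_mod_cast hle
  have hr : (Set.range p').ncard ≤ N - 1 := by
    rw [← hcard, ← Nat.card_eq_fintype_card, ← Set.ncard_univ, ← Set.image_univ]
    exact Set.ncard_image_le Set.finite_univ
  have hBr : B = Set.range p' :=
    Set.eq_of_subset_of_ncard_le hB.subset (hr.trans hBn) hfin
  have hinj : Function.Injective p' := by
    rw [← Set.injOn_univ]
    apply Set.injOn_of_ncard_image_eq _ Set.finite_univ
    rw [Set.image_univ, Set.ncard_univ, Nat.card_eq_fintype_card, hcard]
    exact le_antisymm hr (hBr ▸ hBn)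
  refine AlgebraicIndependent.of_subtype_range hinj ?_
  rw [← hBr]
  exact matroid_indep_iff.1 hB.indep

open MvPolynomial in
/-- A polynomial vanishing at a generic point vanishes on the hyperplane. -/
theorem vanish (M : Type*) [Field M] [Algebra M K] {N : ℕ} {p : Fin N → K} (v : Fin N → M)
    (i₀ : Fin N) (hv : v i₀ ≠ 0) (hp : ∑ i, p i * algebraMap M K (v i) = 1)
    (hind : AlgebraicIndependent M (fun i : {i // i ≠ i₀} => p i))
    (f : MvPolynomial (Fin N) M) (hf : aeval p f = 0) (q : Fin N → K)
    (hq : ∑ i, q i * algebraMap M K (v i) = 1) : aeval q f = 0 := by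
  classical
  let σ : Fin N → MvPolynomial {i // i ≠ i₀} M := fun i =>
    if h : i = i₀ then C (v i₀)⁻¹ * (1 - ∑ j : {i // i ≠ i₀}, C (v j) * X j) else X ⟨i, h⟩
  have key : ∀ r : Fin N → K, ∑ i, r i * algebraMap M K (v i) = 1 →
      aeval r f = aeval (fun i : {i // i ≠ i₀} => r i) (aeval σ f) := by
    intro r hr
    have hv' : algebraMap M K (v i₀) ≠ 0 := by simpa using hv
    have h0 := coord_eq (v := fun i => algebraMap M K (v i)) i₀ hv' hr
    rw [← AlgHom.comp_apply, MvPolynomial.comp_aeval]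
    congr 2
    ext i
    by_cases hi : i = i₀
    · subst hi
      simp [σ, h0]
    · simp [σ, hi]
  have hz : aeval σ f = 0 := by
    apply hind
    rw [← key p hp, hf, map_zero]
  rw [key q hq, hz, map_zero]

open MvPolynomial in
/-- If a nonzero polynomial over `F` vanishes on the hyperplane, its coefficients are
algebraic over `F`. -/
theorem alg_of_vanish [CharZero K] (F : Subfield K) {N : ℕ} (v : Fin N → K)
    (f : MvPolynomial (Fin N) F) (hf : f ≠ 0)
    (h : ∀ q : Fin N → K, ∑ i, q i * v i = 1 → aeval q f = 0) (i : Fin N) :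
    IsAlgebraic F (v i) := by
  have step : ∀ a : Fin N → F, eval a f ≠ 0 → IsAlgebraic F (∑ i, (a i : K) * v i) := by
    intro a ha
    by_cases hc : ∑ i, (a i : K) * v i = 0
    · rw [hc]; exact isAlgebraic_zero
    set c := ∑ i, (a i : K) * v i with hcdef
    rw [← IsAlgebraic.inv_iff]
    refine ⟨aeval (fun i => Polynomial.C (a i) * Polynomial.X) f, ?_, ?_⟩
    · intro h0
      apply ha
      have := congrArg (Polynomial.aeval (1 : F)) h0
      rw [← AlgHom.comp_apply, MvPolynomial.comp_aeval] at this
      simpa [MvPolynomial.aeval_eq_eval] using this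
    · rw [← AlgHom.comp_apply, MvPolynomial.comp_aeval]
      apply h
      have : ∀ j, (Polynomial.aeval c⁻¹) (Polynomial.C (a j) * Polynomial.X) * v j
          = c⁻¹ * ((a j : K) * v j) := by
        intro j
        simp only [map_mul, Polynomial.aeval_C, Polynomial.aeval_X]
        change (a j : K) * c⁻¹ * v j = _
        ring
      simp_rw [this]
      rw [← Finset.mul_sum, ← hcdef, inv_mul_cancel₀ hc]
  have : Infinite F := inferInstance
  obtain ⟨a, ha⟩ : ∃ a : Fin N → F, eval a f ≠ 0 := by
    by_contra! hcon
    exact hf (MvPolynomial.funext fun x => by rw [hcon x, map_zero])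
  obtain ⟨s, hs0, hs⟩ : ∃ s : F, s ≠ 0 ∧ eval (a + Pi.single i s) f ≠ 0 := by
    let g : Polynomial F :=
      aeval (fun j => Polynomial.C (a j) + if j = i then Polynomial.X else 0) f
    have hg : ∀ s, g.eval s = eval (a + Pi.single i s) f := by
      intro s
      change Polynomial.eval s (aeval _ f) = _
      rw [← Polynomial.coe_aeval_eq_eval, ← AlgHom.coe_toRingHom, AlgHom.coe_toRingHom,
        ← AlgHom.comp_apply, MvPolynomial.comp_aeval, MvPolynomial.aeval_eq_eval]
      congr 2
      ext j
      by_cases hj : j = i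
      · subst hj; simp
      · simp [hj]
    have hg0 : g ≠ 0 := by
      intro h0
      apply ha
      have := hg 0
      rw [h0] at this
      simpa using this.symm
    have hg1 : Polynomial.X * g ≠ 0 := mul_ne_zero Polynomial.X_ne_zero hg0
    obtain ⟨s, hs⟩ : ∃ s, (Polynomial.X * g).eval s ≠ 0 := by
      by_contra! hcon
      exact hg1 (Polynomial.funext fun x => by rw [hcon x]; simp)
    rw [Polynomial.eval_mul, Polynomial.eval_X, hg] at hs
    exact ⟨s, left_ne_zero_of_mul hs, right_ne_zero_of_mul hs⟩
  have h1 := step a ha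
  have h2 := step _ hs
  have h3 : v i = (s : K)⁻¹ * (∑ j, ((a + Pi.single i s : Fin N → F) j : K) * v j
      - ∑ j, (a j : K) * v j) := by
    have hsK : (s : K) ≠ 0 := by simpa using hs0
    rw [← Finset.sum_sub_distrib, Finset.sum_eq_single i]
    · simp
      field_simp
      ring
    · intro j _ hj
      simp [hj]
    · simp
  rw [h3]
  exact (isAlgebraic_mem (inv_mem s.2)).mul (h2.sub h1)

end GHL

/-- The generic hyperplane lemma: if `p̄` is a generic point over `A(v̄)` of the
hyperplane `Π_{v̄} = {x̄ : Σ xᵢ·vᵢ = 1}`, then for any tuple `w̄` algebraic over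
`A(v̄)`, either `v̄` is algebraic over `A(w̄)`, or `w̄` has the same transcendence
degree over `A(p̄)` as over `A`. -/
theorem generic_hyperplane_lemma {K : Type*} [Field K] [CharZero K] [IsAlgClosed K]
    (A : Subfield K) (N : ℕ) (hN : 1 ≤ N) (v p : Fin N → K)
    (hmem : ∑ i, p i * v i = 1)
    (hgen : Subfield.trdegTuple (A.extend (Set.range v)) p = ((N - 1 : ℕ) : Cardinal)) :
    ∀ (m : ℕ) (w : Fin m → K),
      (∀ j, IsAlgebraic (A.extend (Set.range v)) (w j)) →
      (∀ i, IsAlgebraic (A.extend (Set.range w)) (v i)) ∨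
        Subfield.trdegTuple (A.extend (Set.range p)) w = Subfield.trdegTuple A w := by
  intro m w hw
  by_cases hind : AlgebraicIndependent (A.extend (Set.range w)) p
  · exact Or.inr (GHL.trdeg_eq_of_indep A p w hind)
  left
  obtain ⟨f, hf0, hf⟩ : ∃ f : MvPolynomial (Fin N) (A.extend (Set.range w)),
      f ≠ 0 ∧ MvPolynomial.aeval p f = 0 := by
    rw [algebraicIndependent_iff] at hind
    push Not at hind
    obtain ⟨f, h1, h2⟩ := hind
    exact ⟨f, h2, h1⟩
  obtain ⟨i₀, hv0⟩ : ∃ i, v i ≠ 0 := by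
    by_contra! hcon
    simp [hcon] at hmem
  have hvF : ∀ i, v i ∈ A.extend (Set.range v) := fun i => GHL.subset_extend _ _ ⟨i, rfl⟩
  have hpind := (GHL.indep_coords _ hvF i₀ hv0 hmem hgen).algebraicClosure
  set F := A.extend (Set.range v) with hF
  have hle : A.extend (Set.range w) ≤ (algebraicClosure F K).toSubfield := by
    apply GHL.extend_mono
    · intro x hx
      exact (mem_algebraicClosure_iff).2 (GHL.isAlgebraic_mem (GHL.le_extend _ _ hx))
    · rintro _ ⟨j, rfl⟩
      exact (mem_algebraicClosure_iff).2 (hw j)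
  let ι : A.extend (Set.range w) →+* algebraicClosure F K := Subfield.inclusion hle
  have hι : ∀ q : Fin N → K, MvPolynomial.aeval q (MvPolynomial.map ι f)
      = MvPolynomial.aeval q f := by
    intro q
    rw [MvPolynomial.aeval_def, MvPolynomial.eval₂_map, MvPolynomial.aeval_def]
    rfl
  let v' : Fin N → algebraicClosure F K := fun i =>
    ⟨v i, (mem_algebraicClosure_iff).2 (GHL.isAlgebraic_mem (hvF i))⟩
  have hv' : v' i₀ ≠ 0 := fun h => hv0 (congrArg Subtype.val h)
  refine GHL.alg_of_vanish _ v f hf0 fun q hq => ?_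
  rw [← hι]
  exact GHL.vanish (algebraicClosure F K) v' i₀ hv' hmem hpind _ (by rw [hι, hf]) q hq
end

section
/- Let K be an algebraically closed field of characteristic zero, A ⊆ K a subfield, n ≥ 1, and v̄ = (v₁,…,v_{2n}) ∈ K^{2n}. Assume: (i) for every nonempty subset ī = {i₁ < … < i_k} of {1,…,n}, trdeg_A(v_{i₁},…,v_{i_k}, v_{n+i₁},…,v_{n+i_k}) ≥ k (the locus of v̄ over A is normal); and (ii) trdeg_A(v̄) > n. Let p̄ = (p₁,…,p_{2n}) ∈ K^{2n} satisfy Σᵢ pᵢ·vᵢ = 1 and trdeg_{A(v̄)}(p̄) = 2n − 1. Then trdeg_{A(p̄)}(v̄) = trdeg_A(v̄) − 1, and for every nonempty subset ī = {i₁ < … < i_k} of {1,…,n}, trdeg_{A(p̄)}(v_{i₁},…,v_{i_k}, v_{n+i₁},…,v_{n+i_k}) ≥ k. (This is the algebraic content of the intersection-with-generic-hyperplanes lemma: intersecting a normal variety of dimension greater than n with a generic hyperplane yields a normal variety of one lower dimension.) -/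
/-- The transcendence degree over a subfield `F` of the subfield generated by `F`
and a set `s`. -/
noncomputable def Subfield.trdegSet {K : Type*} [Field K] (F : Subfield K) (s : Set K) :
    Cardinal :=
  Subfield.trdeg F (F.extend s)

section helpers
open MvPolynomial in
lemma key_spec {B C K ι : Type*} [Field B] [Field C] [Field K] [Algebra B C] [Algebra B K]
    [Algebra C K] [IsScalarTower B C K] [CharZero B] [Fintype ι] (z : ι → K)
    (hz : AlgebraicIndependent C z) (c0 : C) (c : ι → C) (hc : Transcendental B c0) :
    AlgebraicIndependent B
      (fun o : Option ι => o.elim (algebraMap C K c0 - ∑ i, algebraMap C K (c i) * z i) z) := by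
  rw [algebraicIndependent_iff]
  intro G hG
  by_contra hG0
  let l : MvPolynomial ι C := MvPolynomial.C c0 - ∑ i, MvPolynomial.C (c i) * X i
  have h1 : aeval (fun o : Option ι => o.elim l X) G = 0 := by
    apply hz.eq_zero_of_aeval_eq_zero
    rw [← hG]
    have : ((aeval z : MvPolynomial ι C →ₐ[C] K).restrictScalars B).comp
        (aeval (fun o : Option ι => o.elim l X)) = 
        aeval (fun o : Option ι => o.elim (algebraMap C K c0 - ∑ i, algebraMap C K (c i) * z i) z) := by
      ext o
      cases o <;> simp [l]
    exact DFunLike.congr_fun this G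
  set g := optionEquivLeft B ι G with hg
  have hg0 : g ≠ 0 := by simpa [hg] using hG0
  have h2 : ∀ a : ι → B, Polynomial.aeval (c0 - ∑ i, c i * algebraMap B C (a i))
      (g.map (eval a)) = 0 := by
    intro a
    have e1 : aeval (fun o : Option ι => o.elim (c0 - ∑ i, c i * algebraMap B C (a i))
        (fun i => algebraMap B C (a i))) G = 0 := by
      have : ((aeval (fun i => algebraMap B C (a i)) : MvPolynomial ι C →ₐ[C] C).restrictScalars B).comp
        (aeval (fun o : Option ι => o.elim l X)) = 
        aeval (fun o : Option ι => o.elim (c0 - ∑ i, c i * algebraMap B C (a i))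
        (fun i => algebraMap B C (a i))) := by
        ext o
        cases o <;> simp [l]
      rw [← this]
      simp [h1]
    rw [← e1]
    have : ((Polynomial.aeval (c0 - ∑ i, c i * algebraMap B C (a i))).comp
      (Polynomial.mapAlgHom (aeval a : MvPolynomial ι B →ₐ[B] B))).comp
        (optionEquivLeft B ι).toAlgHom = aeval (fun o : Option ι => o.elim (c0 - ∑ i, c i * algebraMap B C (a i))
        (fun i => algebraMap B C (a i))) := by
        ext o
        cases o <;> simp
    exact DFunLike.congr_fun this G
  have hlc : g.leadingCoeff ≠ 0 := by simpa using hg0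
  set d := g.leadingCoeff with hd
  obtain ⟨a, ha1, ha2⟩ : ∃ a : ι → B, eval a d ≠ 0 ∧ eval (fun i => 2 * a i) d ≠ 0 := by
    by_contra hcon
    push Not at hcon
    have e : d * (aeval (fun i => MvPolynomial.C 2 * X i) d : MvPolynomial ι B) = 0 := by
      apply MvPolynomial.funext
      intro a
      have e2 : eval a (aeval (fun i => MvPolynomial.C 2 * X i) d : MvPolynomial ι B)
          = eval (fun i => 2 * a i) d := by
        rw [← coe_aeval_eq_eval, ← coe_aeval_eq_eval]
        have : (aeval a : MvPolynomial ι B →ₐ[B] B).comp (aeval (fun i => MvPolynomial.C 2 * X i))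
          = aeval (fun i => 2 * a i) := by ext; simp
        exact DFunLike.congr_fun this d
      rw [map_mul, e2, map_zero]
      by_cases h : eval a d = 0
      · simp [h]
      · simp [hcon a h]
    rcases mul_eq_zero.mp e with e | e
    · exact hlc e
    · apply hlc
      have : (aeval (fun i => MvPolynomial.C (2⁻¹) * X i) : MvPolynomial ι B →ₐ[B] _).comp
        (aeval (fun i => MvPolynomial.C 2 * X i)) = AlgHom.id B (MvPolynomial ι B) := by
        ext1 i
        simp only [AlgHom.comp_apply, aeval_X, map_mul, algHom_C, algebraMap_eq, AlgHom.id_apply]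
        rw [← mul_assoc, ← map_mul]; simp
      have h := DFunLike.congr_fun this d
      rw [AlgHom.comp_apply, e, map_zero] at h
      exact h.symm
  have alg : ∀ a : ι → B, eval a d ≠ 0 → IsAlgebraic B (c0 - ∑ i, c i * algebraMap B C (a i)) := by
    intro a ha
    refine ⟨g.map (eval a), fun h => ha ?_, h2 a⟩
    have := congrArg (fun f => f.coeff g.natDegree) h
    simpa [Polynomial.coeff_map, hd] using this
  apply hc
  have e : c0 = algebraMap B C 2 * (c0 - ∑ i, c i * algebraMap B C (a i))
      - (c0 - ∑ i, c i * algebraMap B C (2 * a i)) := by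
    have : ∑ i, c i * algebraMap B C (2 * a i) = 2 * ∑ i, c i * algebraMap B C (a i) := by
      rw [Finset.mul_sum]
      refine Finset.sum_congr rfl fun i _ => ?_
      rw [map_mul, map_ofNat]; ring
    rw [this, map_ofNat]; ring
  rw [e]
  exact ((isAlgebraic_algebraMap _).mul (alg a ha1)).sub (alg _ ha2)

namespace Subfield
variable {K : Type*} [Field K]

lemma le_extend (F : Subfield K) (s : Set K) : F ≤ F.extend s :=
  fun _ hx => subset_closure (Or.inl hx)

lemma subset_extend (F : Subfield K) (s : Set K) : s ⊆ F.extend s :=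
  fun _ hx => subset_closure (Or.inr hx)

lemma extend_le {F G : Subfield K} {s : Set K} (h : F ≤ G) (hs : s ⊆ G) : F.extend s ≤ G :=
  closure_le.mpr (Set.union_subset h hs)

lemma extend_extend (F : Subfield K) (s t : Set K) :
    (F.extend s).extend t = (F.extend t).extend s := by
  apply le_antisymm <;>
  exact extend_le (extend_le ((le_extend _ _).trans (le_extend _ _)) (subset_extend _ _))
    ((subset_extend _ _).trans (le_extend _ _))

lemma trdeg_eq_algebra (F E : Subfield K) [Algebra F E] (h : ∀ a : F, (algebraMap F E a : K) = a) :
    F.trdeg E = Algebra.trdeg F E := by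
  let f : E →ₐ[F] K := { E.subtype with commutes' := fun a => h a }
  have hf : Function.Injective f := Subtype.val_injective
  apply le_antisymm
  · refine ciSup_le' ?_
    rintro ⟨t, ht, hi⟩
    let y : t → E := fun a => ⟨a, ht a.2⟩
    have : AlgebraicIndependent F y := AlgebraicIndependent.of_comp f hi
    exact this.cardinalMk_le_trdeg
  · refine ciSup_le' ?_
    rintro ⟨t, ht⟩
    have h1 : AlgebraicIndependent F (fun a : t => (a.1 : K)) :=
      AlgebraicIndependent.map' (f := f) ht hf
    have h2 := h1.to_subtype_range
    refine le_trans ?_ (le_ciSup (Cardinal.bddAbove_of_small)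
      ⟨Set.range (fun a : t => (a.1 : K)), ?_, h2⟩)
    · exact (Cardinal.mk_range_eq _ h1.injective).ge
    · rintro _ ⟨a, rfl⟩; exact a.1.2

lemma trdeg_add (F E G : Subfield K) (h1 : F ≤ E) (h2 : E ≤ G) :
    F.trdeg E + E.trdeg G = F.trdeg G := by
  let _ := (inclusion h1).toAlgebra
  let _ := (inclusion h2).toAlgebra
  let _ := (inclusion (h1.trans h2)).toAlgebra
  have : IsScalarTower F E G := IsScalarTower.of_algebraMap_eq' rfl
  rw [trdeg_eq_algebra F E (fun _ => rfl), trdeg_eq_algebra E G (fun _ => rfl),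
    trdeg_eq_algebra F G (fun _ => rfl)]
  exact _root_.trdeg_add_eq F E

lemma card_le_trdegSet {F : Subfield K} {s : Set K} {ι : Type} [Fintype ι] (z : ι → K)
    (hz : AlgebraicIndependent F z) (h : ∀ i, z i ∈ F.extend s) :
    (Fintype.card ι : Cardinal) ≤ F.trdegSet s := by
  have := le_ciSup (f := fun t : {t : Set K // t ⊆ (F.extend s : Set K) ∧
    AlgebraicIndependent F ((↑) : t → K)} => Cardinal.mk t.1) (Cardinal.bddAbove_of_small)
      ⟨Set.range z, by rintro _ ⟨a, rfl⟩; exact h a, hz.to_subtype_range⟩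
  refine le_trans ?_ this
  have h := Cardinal.mk_range_eq_of_injective hz.injective
  simp only [Cardinal.mk_fintype, Cardinal.lift_natCast] at h
  simp [← h]

lemma extend_eq_adjoin (F : Subfield K) (s : Set K) :
    F.extend s = (IntermediateField.adjoin F s).toSubfield := by
  apply le_antisymm
  · apply extend_le
    · intro a ha
      exact (IntermediateField.adjoin F s).algebraMap_mem ⟨a, ha⟩
    · exact IntermediateField.subset_adjoin F s
  · change closure _ ≤ _
    rw [closure_le]
    apply Set.union_subset
    · rintro _ ⟨a, rfl⟩; exact le_extend _ _ a.2
    · exact subset_extend _ _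

lemma trdegSet_eq (F : Subfield K) (s : Set K) :
    F.trdegSet s = Algebra.trdeg F (IntermediateField.adjoin F s) := by
  unfold trdegSet
  rw [extend_eq_adjoin]
  let _ : Algebra F (IntermediateField.adjoin F s).toSubfield :=
    inferInstanceAs (Algebra F (IntermediateField.adjoin F s))
  exact trdeg_eq_algebra F (IntermediateField.adjoin F s).toSubfield (fun _ => rfl)

lemma trdegSet_eq_zero (F : Subfield K) (s : Set K) (h : ∀ a ∈ s, IsAlgebraic F a) :
    F.trdegSet s = 0 := by
  rw [trdegSet_eq]
  have := IntermediateField.isAlgebraic_adjoin (K := F) (S := s) (fun a ha => (h a ha).isIntegral)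
  exact _root_.trdeg_eq_zero 


lemma isAlgebraic_adjoin_range (F : Subfield K) {ι : Type} (z : ι → K)
    (z' : ι → IntermediateField.adjoin F (Set.range z)) (hz' : ∀ i, (z' i : K) = z i) :
    Algebra.IsAlgebraic (Algebra.adjoin F (Set.range z'))
      (IntermediateField.adjoin F (Set.range z)) := by
  rw [← IntermediateField.isAlgebraic_adjoin_iff_top]
  have : IntermediateField.adjoin F (Set.range z') = ⊤ := by
    apply IntermediateField.lift_injective
    rw [IntermediateField.lift_adjoin, IntermediateField.lift_top, ← Set.range_comp]
    congr 2
    funext i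
    exact hz' i
  rw [this, Algebra.isAlgebraic_iff_isIntegral]
  exact Algebra.isIntegral_of_surjective IntermediateField.topEquiv.surjective

lemma algebraicIndependent_of_card_le (F : Subfield K) {ι : Type} [Fintype ι] (z : ι → K)
    (h : (Fintype.card ι : Cardinal) ≤ F.trdegSet (Set.range z)) : AlgebraicIndependent F z := by
  rw [trdegSet_eq] at h
  let z' : ι → IntermediateField.adjoin F (Set.range z) :=
    fun i => ⟨z i, IntermediateField.subset_adjoin F _ ⟨i, rfl⟩⟩
  have := isAlgebraic_adjoin_range F z z' (fun _ => rfl)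
  have : FaithfulSMul F (IntermediateField.adjoin F (Set.range z)) :=
    (faithfulSMul_iff_algebraMap_injective _ _).mpr (algebraMap F _).injective
  have hb : IsTranscendenceBasis F z' :=
    Algebra.IsAlgebraic.isTranscendenceBasis_of_lift_le_trdeg_of_finite F z' (by simpa using h)
  exact hb.1.map' (f := (IntermediateField.adjoin F (Set.range z)).val) Subtype.val_injective

lemma trdegSet_range_le (F : Subfield K) {ι : Type} [Fintype ι] (z : ι → K) :
    F.trdegSet (Set.range z) ≤ Fintype.card ι := by
  rw [trdegSet_eq]
  let z' : ι → IntermediateField.adjoin F (Set.range z) :=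
    fun i => ⟨z i, IntermediateField.subset_adjoin F _ ⟨i, rfl⟩⟩
  have := isAlgebraic_adjoin_range F z z' (fun _ => rfl)
  refine (Algebra.IsAlgebraic.trdeg_le_cardinalMk F (Set.range z')).trans ?_
  simpa using Cardinal.mk_range_le_lift (f := z')

/-- The generic point of a hyperplane: all coordinates but one are independent over `C`. -/
lemma indep_of_generic (C : Subfield K) {ι : Type} [Fintype ι] [DecidableEq ι] (v p : ι → K)
    (hv : ∀ i, v i ∈ C) (hsum : ∑ i, p i * v i = 1)
    (hgen : C.trdegSet (Set.range p) = ((Fintype.card ι - 1 : ℕ) : Cardinal))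
    (j : ι) (hj : v j ≠ 0) :
    p j = (v j)⁻¹ - ∑ i : {i // i ≠ j}, v i * (v j)⁻¹ * p i ∧
      AlgebraicIndependent C (fun i : {i // i ≠ j} => p i) := by
  have hpj : p j = (v j)⁻¹ - ∑ i : {i // i ≠ j}, v i * (v j)⁻¹ * p i := by
    have h1 : ∑ i, p i * v i = p j * v j + ∑ i : {i // i ≠ j}, p i * v i :=
      Fintype.sum_eq_add_sum_subtype_ne _ j
    rw [hsum] at h1
    have h2 : ∑ i : {i // i ≠ j}, v i * (v j)⁻¹ * p i
        = (v j)⁻¹ * ∑ i : {i // i ≠ j}, p i * v i := by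
      rw [Finset.mul_sum]
      exact Finset.sum_congr rfl fun i _ => by ring
    rw [h2]
    have h3 : ∑ i : {i // i ≠ j}, p i * v i = 1 - p j * v j := by rw [h1]; ring
    rw [h3]
    field_simp
    ring
  refine ⟨hpj, algebraicIndependent_of_card_le _ _ ?_⟩
  have hext : C.extend (Set.range fun i : {i // i ≠ j} => p i) = C.extend (Set.range p) := by
    apply le_antisymm
    · refine extend_le (le_extend _ _) ?_
      rintro _ ⟨i, rfl⟩
      exact subset_extend _ _ ⟨i, rfl⟩
    · refine extend_le (le_extend _ _) ?_
      rintro _ ⟨i, rfl⟩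
      have hsub : ∀ i : {i // i ≠ j}, p i ∈ C.extend (Set.range fun i : {i // i ≠ j} => p i) :=
        fun i => subset_extend _ _ ⟨i, rfl⟩
      by_cases hi : i = j
      · rw [hi, hpj]
        have hvi : ∀ i, v i ∈ C.extend (Set.range fun k : {k // k ≠ j} => p k) :=
          fun i => le_extend _ _ (hv i)
        exact sub_mem (inv_mem (hvi _))
          (sum_mem fun k _ => mul_mem (mul_mem (hvi _) (inv_mem (hvi _))) (hsub k))
      · exact hsub ⟨i, hi⟩
  have : C.trdegSet (Set.range fun i : {i // i ≠ j} => p i) = C.trdegSet (Set.range p) := by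
    unfold trdegSet; rw [hext]
  rw [this, hgen]
  simp

lemma generic_lower (B C : Subfield K) (hBC : B ≤ C) {ι : Type} [Fintype ι] (v p : ι → K)
    (hv : ∀ i, v i ∈ C) (hsum : ∑ i, p i * v i = 1)
    (hgen : C.trdegSet (Set.range p) = ((Fintype.card ι - 1 : ℕ) : Cardinal)) :
    ((Fintype.card ι - 1 : ℕ) : Cardinal) ≤ B.trdegSet (Set.range p) := by
  classical
  obtain ⟨j, hj⟩ : ∃ j, v j ≠ 0 := by
    by_contra h
    push Not at h
    simp [h] at hsum
  have h := (indep_of_generic C v p hv hsum hgen j hj).2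
  let _ := (inclusion hBC).toAlgebra
  have : IsScalarTower B C K := IsScalarTower.of_algebraMap_eq' rfl
  have h2 : AlgebraicIndependent B (fun i : {i // i ≠ j} => p i) :=
    h.restrictScalars (FaithfulSMul.algebraMap_injective B C)
  have := card_le_trdegSet (s := Set.range p) _ h2 (fun i => subset_extend _ _ ⟨i, rfl⟩)
  simpa using this

lemma generic_full [CharZero K] (B C : Subfield K) (hBC : B ≤ C) {ι : Type} [Fintype ι]
    (v p : ι → K)
    (hv : ∀ i, v i ∈ C) (hsum : ∑ i, p i * v i = 1)
    (hgen : C.trdegSet (Set.range p) = ((Fintype.card ι - 1 : ℕ) : Cardinal))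
    (j : ι) (hj : Transcendental B (v j)) :
    B.trdegSet (Set.range p) = Fintype.card ι := by
  classical
  have hj0 : v j ≠ 0 := fun h => hj (h ▸ isAlgebraic_zero)
  obtain ⟨hpj, h⟩ := indep_of_generic C v p hv hsum hgen j hj0
  let _ := (inclusion hBC).toAlgebra
  have : IsScalarTower B C K := IsScalarTower.of_algebraMap_eq' rfl
  have : CharZero B := inferInstance
  have htr : Transcendental B ((⟨v j, hv j⟩ : C)⁻¹) := by
    intro ha
    have h1 : IsAlgebraic B (⟨v j, hv j⟩ : C) := by simpa using ha.inv
    exact hj (h1.algebraMap (A := K))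
  have h2 := key_spec _ h _ (fun i : {i // i ≠ j} => (⟨v i, hv i⟩ * ⟨v j, hv j⟩⁻¹ : C)) htr
  apply le_antisymm (trdegSet_range_le _ _)
  have h3 := card_le_trdegSet (s := Set.range p) _ h2 (by
    rintro (_ | i)
    · refine subset_extend _ _ ⟨j, ?_⟩
      exact hpj
    · exact subset_extend _ _ ⟨i, rfl⟩)
  have h4 : Fintype.card (Option {i // i ≠ j}) = Fintype.card ι := by
    have : 0 < Fintype.card ι := Fintype.card_pos_iff.mpr ⟨j⟩
    simp; omega
  rwa [h4] at h3

lemma exists_transcendental (B : Subfield K) {ι : Type} (v : ι → K)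
    (h : B.trdegSet (Set.range v) ≠ 0) : ∃ j, Transcendental B (v j) := by
  by_contra hcon
  apply h
  apply trdegSet_eq_zero
  rintro _ ⟨j, rfl⟩
  by_contra hh
  exact hcon ⟨j, hh⟩

end Subfield
end helpers

/-- Intersecting a normal variety of dimension `> n` with a generic hyperplane yields a
normal variety of dimension one lower.  Here `v̄ = (x̄, ȳ) ∈ K^{2n}` is a point whose
locus over `A` is normal, of transcendence degree `> n` over `A`, and `p̄ = (p̄, q̄)` is a
generic point over `A(v̄)` of the hyperplane `Π_{v̄}`. -/
theorem generic_hyperplane_normal {K : Type*} [Field K] [CharZero K] [IsAlgClosed K]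
    (A : Subfield K) (n : ℕ) (hn : 1 ≤ n) (x y p q : Fin n → K)
    (hnormal : ∀ s : Finset (Fin n), s.Nonempty →
      (s.card : Cardinal) ≤ A.trdegSet (x '' ↑s ∪ y '' ↑s))
    (hdim : (n : Cardinal) < A.trdegSet (Set.range x ∪ Set.range y))
    (hmem : ∑ i, (p i * x i + q i * y i) = 1)
    (hgen : Subfield.trdegSet (A.extend (Set.range x ∪ Set.range y))
      (Set.range p ∪ Set.range q) = ((2 * n - 1 : ℕ) : Cardinal)) :
    Subfield.trdegSet (A.extend (Set.range p ∪ Set.range q)) (Set.range x ∪ Set.range y) + 1 =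
      A.trdegSet (Set.range x ∪ Set.range y) ∧
    ∀ s : Finset (Fin n), s.Nonempty →
      (s.card : Cardinal) ≤
        Subfield.trdegSet (A.extend (Set.range p ∪ Set.range q)) (x '' ↑s ∪ y '' ↑s) := by
  let ι := Fin n ⊕ Fin n
  let v : ι → K := Sum.elim x y
  let w : ι → K := Sum.elim p q
  have hv : Set.range x ∪ Set.range y = Set.range v := (Set.Sum.elim_range x y).symm
  have hw : Set.range p ∪ Set.range q = Set.range w := (Set.Sum.elim_range p q).symm
  have hcard : Fintype.card ι = 2 * n := by simp [ι]; ring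
  rw [hv] at hdim hgen ⊢
  rw [hw] at hgen ⊢
  have hsum : ∑ i, w i * v i = 1 := by
    rw [← hmem, Fintype.sum_sum_type, Finset.sum_add_distrib]
    rfl
  have hvC : ∀ i, v i ∈ A.extend (Set.range v) := fun i => Subfield.subset_extend _ _ ⟨i, rfl⟩
  have hgen' : (A.extend (Set.range v)).trdegSet (Set.range w)
      = ((Fintype.card ι - 1 : ℕ) : Cardinal) := by rw [hgen, hcard]
  obtain ⟨d, hd⟩ := Cardinal.lt_aleph0.mp
    ((Subfield.trdegSet_range_le A v).trans_lt (Cardinal.natCast_lt_aleph0))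
  -- trdeg over A of the generic point
  have hAP : A.trdegSet (Set.range w) = ((2 * n : ℕ) : Cardinal) := by
    obtain ⟨j, hj⟩ := Subfield.exists_transcendental A v (by
      intro h; rw [h] at hdim; simp at hdim)
    rw [← hcard]
    exact Subfield.generic_full A _ (Subfield.le_extend _ _) v w hvC hsum hgen' j hj
  have tower : ∀ t : Set K, A.trdegSet t + (A.extend t).trdegSet (Set.range w) =
      ((2 * n : ℕ) : Cardinal) + (A.extend (Set.range w)).trdegSet t := by
    intro t
    rw [← hAP]
    unfold Subfield.trdegSet
    rw [Subfield.trdeg_add _ _ _ (Subfield.le_extend _ _) (Subfield.le_extend _ _),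
      Subfield.trdeg_add _ _ _ (Subfield.le_extend _ _) (Subfield.le_extend _ _),
      Subfield.extend_extend]
  rw [hd] at hdim ⊢
  have hdn : n < d := by exact_mod_cast hdim
  constructor
  · have ht := tower (Set.range v)
    rw [hd, hgen] at ht
    obtain ⟨e, he⟩ := Cardinal.lt_aleph0.mp
      ((Subfield.trdegSet_range_le (A.extend (Set.range w)) v).trans_lt
        (Cardinal.natCast_lt_aleph0))
    rw [he] at ht ⊢
    norm_cast at ht ⊢
    omega
  · intro s hs
    let vs : s ⊕ s → K := Sum.elim (fun i => x i) (fun i => y i)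
    have hvs : x '' ↑s ∪ y '' ↑s = Set.range vs := by
      rw [Set.Sum.elim_range, Set.image_eq_range, Set.image_eq_range]
      rfl
    have hk := hnormal s hs
    rw [hvs] at hk ⊢
    have ht := tower (Set.range vs)
    have hsub : Set.range vs ⊆ Set.range v := by
      rintro _ ⟨i | i, rfl⟩
      · exact ⟨Sum.inl i, rfl⟩
      · exact ⟨Sum.inr i, rfl⟩
    have hSV : A.extend (Set.range vs) ≤ A.extend (Set.range v) :=
      Subfield.extend_le (Subfield.le_extend _ _) (hsub.trans (Subfield.subset_extend _ _))
    obtain ⟨m, hm⟩ := Cardinal.lt_aleph0.mp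
      ((Subfield.trdegSet_range_le A vs).trans_lt (Cardinal.natCast_lt_aleph0))
    obtain ⟨e, he⟩ := Cardinal.lt_aleph0.mp
      ((Subfield.trdegSet_range_le (A.extend (Set.range w)) vs).trans_lt
        (Cardinal.natCast_lt_aleph0))
    obtain ⟨r, hr⟩ := Cardinal.lt_aleph0.mp
      ((Subfield.trdegSet_range_le (A.extend (Set.range vs)) w).trans_lt
        (Cardinal.natCast_lt_aleph0))
    have hlow := Subfield.generic_lower _ _ hSV v w hvC hsum hgen'
    rw [hm, he, hr] at ht
    rw [hm] at hk
    rw [hr, hcard] at hlow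
    rw [he]
    have hsn : s.card ≤ n := by simpa using Finset.card_le_univ s
    norm_cast at ht hk hlow ⊢
    by_cases hmk : m = s.card
    · -- here `v` is not algebraic over `A(v_s)`
      have hne : (A.extend (Set.range vs)).trdegSet (Set.range v) ≠ 0 := by
        intro h0
        have hadd := Subfield.trdeg_add A _ _ (Subfield.le_extend A (Set.range vs))
          (Subfield.le_extend (A.extend (Set.range vs)) (Set.range v))
        have hE : (A.extend (Set.range vs)).extend (Set.range v) = A.extend (Set.range v) :=
          le_antisymm (Subfield.extend_le hSV (Subfield.subset_extend _ _))
            (Subfield.extend_le ((Subfield.le_extend _ _).trans (Subfield.le_extend _ _))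
              (Subfield.subset_extend _ _))
        change A.trdegSet (Set.range vs) + (A.extend (Set.range vs)).trdegSet (Set.range v) = _
          at hadd
        rw [h0, hE, hm] at hadd
        change _ = A.trdegSet (Set.range v) at hadd
        rw [hd] at hadd
        norm_cast at hadd
        omega
      obtain ⟨j, hj⟩ := Subfield.exists_transcendental _ v hne
      have hfull := Subfield.generic_full _ _ hSV v w hvC hsum hgen' j hj
      rw [hr, hcard] at hfull
      norm_cast at hfull
      omega
    · omega
end

section
/- Let K be an algebraically closed field of characteristic zero and C ⊆ K an algebraically closed subfield. Let P ⊆ K[X₁,…,Xₙ] be a prime ideal, let V ⊆ Kⁿ be its zero set, and let d be the Krull dimension of K[X₁,…,Xₙ]/P. Suppose that for every subfield A ⊆ K that is finitely generated as a field extension of ℚ and over which V is defined, there exists a point d̄ ∈ Cⁿ with d̄ ∈ V and trdeg_A(d̄) = d (a C-point of V generic over A). Then V is defined over C. -/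
/-- A variety with vanishing prime ideal `P ⊆ K[X₁,…,Xₙ]` is defined over a subfield `F`
if `P` is generated, as an ideal, by `P ∩ F[X₁,…,Xₙ]`. -/
def DefinedOver {K : Type*} [Field K] {n : ℕ} (P : Ideal (MvPolynomial (Fin n) K))
    (F : Subfield K) : Prop :=
  P = Ideal.span {f : MvPolynomial (Fin n) K | f ∈ P ∧ ∀ m, f.coeff m ∈ F}

section helpers
open MvPolynomial

noncomputable def coefAux {K : Type*} [Field K] {F : Subfield K} {σ : Type*} (φ : K →ₗ[F] F) :
    MvPolynomial σ K →+ MvPolynomial σ F where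
  toFun f := ∑ m ∈ f.support, monomial m (φ (f.coeff m))
  map_zero' := by simp
  map_add' f g := by
    classical
    ext m
    simp only [coeff_add, coeff_sum, coeff_monomial, Finset.sum_ite_eq', mem_support_iff]
    by_cases h1 : coeff m f = 0 <;> by_cases h2 : coeff m g = 0 <;>
      by_cases h3 : coeff m f + coeff m g = 0 <;> simp_all [← map_add]

lemma coeff_coefAux {K : Type*} [Field K] {F : Subfield K} {σ : Type*} (φ : K →ₗ[F] F)
    (f : MvPolynomial σ K) (m : σ →₀ ℕ) : (coefAux φ f).coeff m = φ (f.coeff m) := by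
  classical
  simp only [coefAux, AddMonoidHom.coe_mk, ZeroHom.coe_mk, coeff_sum, coeff_monomial,
    Finset.sum_ite_eq', mem_support_iff]
  by_cases h1 : coeff m f = 0 <;> simp [h1]

lemma coefAux_monomial {K : Type*} [Field K] {F : Subfield K} {σ : Type*} (φ : K →ₗ[F] F)
    (m : σ →₀ ℕ) (a : K) : coefAux φ (monomial m a) = monomial m (φ a) := by
  classical
  ext k
  rw [coeff_coefAux, coeff_monomial, coeff_monomial]
  split_ifs <;> simp

lemma coefAux_mul {K : Type*} [Field K] {F : Subfield K} {σ : Type*} (φ : K →ₗ[F] F)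
    (f : MvPolynomial σ K) (g : MvPolynomial σ F) :
    coefAux φ (f * map F.subtype g) = coefAux φ f * g := by
  classical
  refine MvPolynomial.ext _ _ fun m => ?_
  rw [coeff_coefAux, coeff_mul, coeff_mul, map_sum]
  refine Finset.sum_congr rfl fun x _ => ?_
  rw [coeff_coefAux, coeff_map, mul_comm, mul_comm (φ _)]
  exact φ.map_smul (coeff x.2 g) (coeff x.1 f)

lemma coefAux_rename {K : Type*} [Field K] {F : Subfield K} {σ τ : Type*} (φ : K →ₗ[F] F)
    (j : σ → τ) (f : MvPolynomial σ K) :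
    coefAux φ (rename j f) = rename j (coefAux φ f) := by
  induction f using MvPolynomial.induction_on' with
  | monomial u a => simp [rename_monomial, coefAux_monomial]
  | add p q hp hq => simp [hp, hq]

lemma eval_coefAux {K : Type*} [Field K] {F : Subfield K} {σ : Type*} (φ : K →ₗ[F] F)
    (c : σ → F) (f : MvPolynomial σ K) :
    eval c (coefAux φ f) = φ (eval (fun i => (c i : K)) f) := by
  induction f using MvPolynomial.induction_on' with
  | monomial u a =>
    rw [coefAux_monomial, eval_monomial, eval_monomial]
    have : (u.prod fun i e => ((c i : K)) ^ e) = ((u.prod fun i e => c i ^ e : F) : K) := by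
      simp [Finsupp.prod]
    rw [this, mul_comm, mul_comm a]
    exact (φ.map_smul (u.prod fun i e => c i ^ e : F) a).symm
  | add p q hp hq => simp [hp, hq]

lemma exists_map_of_coeff_mem {K : Type*} [Field K] {F : Subfield K} {σ : Type*}
    (f : MvPolynomial σ K) (hf : ∀ m, f.coeff m ∈ F) :
    ∃ g : MvPolynomial σ F, map F.subtype g = f := by
  classical
  refine ⟨∑ m ∈ f.support, monomial m (⟨f.coeff m, hf m⟩ : F), ?_⟩
  rw [map_sum]
  simp only [map_monomial]
  exact f.support_sum_monomial_coeff

lemma coefAux_mem {K : Type*} [Field K] {F : Subfield K} {n : ℕ}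
    {P : Ideal (MvPolynomial (Fin n) K)} (hP : DefinedOver P F) (φ : K →ₗ[F] F)
    {f : MvPolynomial (Fin n) K} (hf : f ∈ P) : map F.subtype (coefAux φ f) ∈ P := by
  rw [hP] at hf
  induction hf using Submodule.span_induction with
  | mem x h =>
    obtain ⟨hx, hc⟩ := h
    obtain ⟨g, rfl⟩ := exists_map_of_coeff_mem x hc
    rw [← one_mul (map _ g), coefAux_mul, map_mul]
    exact P.mul_mem_left _ hx
  | zero => simp
  | add x y _ _ hx hy => rw [map_add, map_add]; exact P.add_mem hx hy
  | smul a x hx hx0 =>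
    clear f hx0
    rw [smul_eq_mul]
    have hx' : x ∈ Submodule.span (MvPolynomial (Fin n) K)
      {f : MvPolynomial (Fin n) K | f ∈ P ∧ ∀ m, f.coeff m ∈ F} := hx
    clear hx
    induction hx' using Submodule.span_induction generalizing a with
    | mem x h =>
      obtain ⟨hx, hc⟩ := h
      obtain ⟨g, rfl⟩ := exists_map_of_coeff_mem x hc
      rw [coefAux_mul, map_mul]
      exact P.mul_mem_left _ hx
    | zero => simp
    | add x y _ _ hx hy => 
      rw [mul_add, map_add, map_add]; exact P.add_mem (hx a) (hy a)
    | smul b x _ hx => rw [smul_eq_mul, ← mul_assoc]; exact hx _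

lemma definedOver_of_dense {K : Type*} [Field K] (C : Subfield K) {n : ℕ}
    (P : Ideal (MvPolynomial (Fin n) K))
    (h : ∀ f, f ∉ P → ∃ db : Fin n → K, (∀ i, db i ∈ C) ∧ (∀ f ∈ P, eval db f = 0) ∧
      eval db f ≠ 0) : DefinedOver P C := by
  classical
  refine le_antisymm (fun f hf => ?_) (Ideal.span_le.2 fun f hf => hf.1)
  let b := Module.Basis.ofVectorSpace C K
  have key : ∀ i, map C.subtype (coefAux (b.coord i) f) ∈ P := by
    intro i
    by_contra hc
    obtain ⟨db, hdb, hv, hne⟩ := h _ hc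
    apply hne
    have h1 := eval_coefAux (b.coord i) (fun k => (⟨db k, hdb k⟩ : C)) f
    simp only at h1
    rw [hv f hf, map_zero] at h1
    have h2 := eval₂_comp_left C.subtype (RingHom.id C) (fun k => (⟨db k, hdb k⟩ : C))
      (coefAux (b.coord i) f)
    rw [eval_map]
    change C.subtype (eval _ _) = _ at h2
    rw [h1, map_zero] at h2
    exact h2.symm
  let T := f.support.biUnion fun m => (b.repr (f.coeff m)).support
  have hsum : f = ∑ i ∈ T, MvPolynomial.C (b i) * map C.subtype (coefAux (b.coord i) f) := by
    ext m
    rw [coeff_sum]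
    simp only [coeff_C_mul, coeff_map, coeff_coefAux]
    by_cases hm : f.coeff m = 0
    · simp [hm]
    conv_lhs => rw [← b.linearCombination_repr (f.coeff m)]
    rw [Finsupp.linearCombination_apply, Finsupp.sum_of_support_subset (s := T)]
    · refine Finset.sum_congr rfl fun i _ => ?_
      rw [mul_comm]; rfl
    · intro i hi
      exact Finset.mem_biUnion.2 ⟨m, by simpa using hm, hi⟩
    · simp
  rw [hsum]
  refine Ideal.sum_mem _ fun i _ => Ideal.mul_mem_left _ _ (Ideal.subset_span ⟨key i, fun m => ?_⟩)
  rw [coeff_map]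
  exact (coeff m (coefAux (b.coord i) f)).2

lemma lift_chain {R S : Type*} [CommRing R] [CommRing S] [Algebra R S] [Algebra.IsIntegral R S]
    (m : ℕ) : ∀ (l : LTSeries (PrimeSpectrum R)), l.length = m → ∀ q : PrimeSpectrum S,
      PrimeSpectrum.comap (algebraMap R S) q = l.head →
      ∃ l' : LTSeries (PrimeSpectrum S), l'.length = m ∧ l'.head = q := by
  induction m with
  | zero => intro l hl q hq; exact ⟨RelSeries.singleton _ q, rfl, rfl⟩
  | succ m ih =>
    intro l hl q hq
    have hl0 : l.length ≠ 0 := by omega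
    have h1 : l.head < (l.tail hl0).head := by
      rw [RelSeries.head_tail]
      have h0 : (0 : Fin (l.length + 1)) < 1 := by
        rw [Fin.lt_def, Fin.val_one', Nat.mod_eq_of_lt (by omega)]; simp
      exact l.strictMono h0
    let p := (l.tail hl0).head
    obtain ⟨Q, hQ, hQp, hQc⟩ := Ideal.exists_ideal_over_prime_of_isIntegral_of_isPrime p.asIdeal
      q.asIdeal (by
        have h3 : q.asIdeal.comap (algebraMap R S) = l.head.asIdeal := by rw [← hq]; rfl
        rw [h3]; exact h1.le)
    obtain ⟨l', hl', hh⟩ := ih (l.tail hl0) (by simp [hl]) ⟨Q, hQp⟩ (PrimeSpectrum.ext hQc)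
    suffices hlt : q < l'.head from
      ⟨l'.cons q hlt, by simp [hl'], RelSeries.head_cons _ _ _⟩
    rw [hh]
    refine lt_of_le_of_ne hQ ?_
    rintro rfl
    apply h1.ne
    rw [← hq]
    exact PrimeSpectrum.ext hQc

lemma ringKrullDim_le_of_integral {R S : Type*} [CommRing R] [CommRing S] [Algebra R S]
    [Algebra.IsIntegral R S] (hinj : Function.Injective (algebraMap R S)) :
    ringKrullDim R ≤ ringKrullDim S := by
  refine iSup_le fun l => ?_
  obtain ⟨Q, -, hQp, hQc⟩ := Ideal.exists_ideal_over_prime_of_isIntegral l.head.asIdeal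
      (⊥ : Ideal S) (by
        intro x hx
        have : algebraMap R S x = 0 := by simpa using hx
        rw [(injective_iff_map_eq_zero _).1 hinj x this]; exact zero_mem _)
  obtain ⟨l', hl', hh⟩ := lift_chain _ l rfl ⟨Q, hQp⟩ (PrimeSpectrum.ext hQc)
  rw [← hl']
  exact le_iSup (fun l : LTSeries (PrimeSpectrum S) => (l.length : WithBot ℕ∞)) l'

lemma trdeg_le_of_krull {K : Type*} [Field K] {n : ℕ} (P : Ideal (MvPolynomial (Fin n) K))
    (hP : P.IsPrime) (d : ℕ) (hd : ringKrullDim (MvPolynomial (Fin n) K ⧸ P) = d) :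
    Algebra.trdeg K (MvPolynomial (Fin n) K ⧸ P) ≤ d := by
  obtain ⟨s, -, g, hg, hi⟩ := exists_integral_inj_algHom_of_quotient P hP.ne_top
  let := g.toRingHom.toAlgebra
  have : IsScalarTower K (MvPolynomial (Fin s) K) (MvPolynomial (Fin n) K ⧸ P) :=
    IsScalarTower.of_algebraMap_eq fun x => (g.commutes x).symm
  have : Algebra.IsIntegral (MvPolynomial (Fin s) K) (MvPolynomial (Fin n) K ⧸ P) := ⟨hi⟩
  have hinj : Function.Injective
    (algebraMap (MvPolynomial (Fin s) K) (MvPolynomial (Fin n) K ⧸ P)) := hg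
  have : FaithfulSMul (MvPolynomial (Fin s) K) (MvPolynomial (Fin n) K ⧸ P) :=
    (faithfulSMul_iff_algebraMap_injective _ _).2 hinj
  have hle := ringKrullDim_le_of_integral hinj
  rw [hd, MvPolynomial.ringKrullDim_of_isNoetherianRing, ringKrullDim_eq_zero_of_field] at hle
  have hsd : s ≤ d := by
    simp only [Nat.card_eq_fintype_card, Fintype.card_fin, zero_add] at hle
    exact_mod_cast hle
  have hb := (IsTranscendenceBasis.mvPolynomial (Fin s) K).algebraMap_comp
    (A := MvPolynomial (Fin n) K ⧸ P)
  have := hb.lift_cardinalMk_eq_trdeg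
  simp at this
  rw [← this]
  exact_mod_cast hsd

lemma eval_ne_zero_of_generic {K : Type*} [Field K] {F : Subfield K} {n : ℕ}
    (P : Ideal (MvPolynomial (Fin n) K)) (hP : P.IsPrime) (hF : DefinedOver P F)
    (d : ℕ) (hd : ringKrullDim (MvPolynomial (Fin n) K ⧸ P) = d)
    (db : Fin n → K) (hdb : ∀ f ∈ P, eval db f = 0) (I : Set K) (hI : I.Finite)
    (j : I → Fin n) (hind : AlgebraicIndependent F (fun x => db (j x)))
    (hcard : (d : Cardinal) ≤ Cardinal.mk I)
    (f : MvPolynomial (Fin n) K) (hf : ∀ m, f.coeff m ∈ F) (hfP : f ∉ P) :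
    eval db f ≠ 0 := by
  have evren : ∀ g : MvPolynomial I F, eval db (map F.subtype (rename j g)) = 0 → g = 0 := by
    intro g hg
    apply (algebraicIndependent_iff.1 hind) g
    rw [eval_map, eval₂_rename] at hg
    exact hg
  have dual : ∀ g : MvPolynomial I K, (∀ φ : K →ₗ[F] F, coefAux φ g = 0) → g = 0 := by
    intro g hg
    ext m
    rw [coeff_zero]
    apply (Module.forall_dual_apply_eq_zero_iff F _).1
    intro φ
    have := congrArg (coeff m) (hg φ)
    rwa [coeff_coefAux, coeff_zero] at this
  let x : I → MvPolynomial (Fin n) K ⧸ P := fun i => Ideal.Quotient.mk P (X (j i))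
  have hx : ∀ g : MvPolynomial I K, aeval x g = Ideal.Quotient.mk P (rename j g) := by
    intro g
    have : aeval x = (Ideal.Quotient.mkₐ K P).comp (rename j) := by
      ext i; simp [x]
    rw [this]; rfl
  have hxind : AlgebraicIndependent K x := by
    rw [algebraicIndependent_iff]
    intro g hg
    rw [hx, Ideal.Quotient.eq_zero_iff_mem] at hg
    apply dual
    intro φ
    apply evren
    rw [← coefAux_rename]
    exact hdb _ (coefAux_mem hF φ hg)
  have := hI.to_subtype
  have htb := hxind.isTranscendenceBasis_of_trdeg_le_of_finite
    ((trdeg_le_of_krull P hP d hd).trans hcard)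
  have halg := htb.isAlgebraic.isAlgebraic (Ideal.Quotient.mk P f)
  obtain ⟨r, hr, hdvd⟩ := halg.exists_nonzero_dvd (mem_nonZeroDivisors_of_ne_zero (by
    rwa [Ne, Ideal.Quotient.eq_zero_iff_mem]))
  obtain ⟨r, hrm⟩ := r
  rw [Algebra.adjoin_range_eq_range_aeval] at hrm
  obtain ⟨g, rfl⟩ := hrm
  obtain ⟨h, hh⟩ := hdvd
  obtain ⟨h, rfl⟩ := Ideal.Quotient.mk_surjective h
  change aeval x g = _ at hh
  rw [hx, ← map_mul, Ideal.Quotient.eq] at hh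
  intro hzero
  apply hr
  have : g = 0 := by
    apply dual
    intro φ
    apply evren
    obtain ⟨f, rfl⟩ := exists_map_of_coeff_mem f hf
    have h1 := hdb _ (coefAux_mem hF φ hh)
    rw [mul_comm, map_sub, coefAux_mul, coefAux_rename, map_sub, map_mul, map_sub, map_mul,
      hzero, mul_zero, sub_zero] at h1
    exact h1
  subst this
  ext
  simp

lemma exists_indep {K : Type*} [Field K] (F : Subfield K) {n : ℕ} (db : Fin n → K) :
    ∃ (I : Set K) (_ : I.Finite) (j : I → Fin n), AlgebraicIndependent F (fun x => db (j x)) ∧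
      F.trdegTuple db ≤ Cardinal.mk I := by
  obtain ⟨I, hI⟩ := (AlgebraicIndependent.matroid F K).exists_isBasis (Set.range db)
  have hfin : I.Finite := (Set.finite_range db).subset hI.subset
  choose j hj using fun x : I => hI.subset x.2
  refine ⟨I, hfin, j, ?_, ?_⟩
  · simp only [hj]
    exact hI.indep
  · refine ciSup_le' fun t => ?_
    obtain ⟨t, ht, hti⟩ := t
    have hsub : (F.extend (Set.range db) : Set K) ⊆
        (AlgebraicIndependent.matroid F K).closure (Set.range db) := by
      rw [AlgebraicIndependent.matroid_closure_eq]
      intro y hy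
      rw [SetLike.mem_coe, Subalgebra.mem_algebraicClosure]
      induction hy using Subfield.closure_induction with
      | mem x hx =>
        rcases hx with hx | hx
        · exact isAlgebraic_algebraMap (A := K)
            (algebraMap F (Algebra.adjoin F (Set.range db)) ⟨x, hx⟩)
        · exact isAlgebraic_algebraMap (A := K)
            (⟨x, Algebra.subset_adjoin hx⟩ : Algebra.adjoin F (Set.range db))
      | one => exact isAlgebraic_one
      | add x y _ _ hx hy => exact hx.add hy
      | neg x _ hx => exact hx.neg
      | inv x _ hx => exact hx.inv
      | mul x y _ _ hx hy => exact hx.mul hy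
    have h3 : (AlgebraicIndependent.matroid F K).Indep t := hti
    have h4 := h3.encard_le_eRk_of_subset (ht.trans hsub)
    rw [Matroid.eRk_closure_eq, ← hI.encard_eq_eRk] at h4
    have htf : t.Finite := by
      rw [← Set.encard_lt_top_iff]
      exact h4.trans_lt (Set.encard_lt_top_iff.2 hfin)
    rw [← Set.cast_ncard htf, ← Set.cast_ncard hfin]
    rw [← htf.cast_ncard_eq, ← hfin.cast_ncard_eq] at h4
    exact_mod_cast h4

end helpers

/-- If an irreducible variety `V ⊆ Kⁿ` has, over every finitely generated field of
definition `A`, a generic point with coordinates in an algebraically closed subfield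
`C`, then `V` is defined over `C`. -/
theorem definedOver_of_generic_constant_points {K : Type*} [Field K] [CharZero K]
    [IsAlgClosed K] (C : Subfield K) [IsAlgClosed C]
    (n : ℕ) (P : Ideal (MvPolynomial (Fin n) K)) (hP : P.IsPrime)
    (d : ℕ) (hd : ringKrullDim (MvPolynomial (Fin n) K ⧸ P) = d)
    (hgen : ∀ A : Subfield K, (∃ s : Finset K, A = Subfield.closure ↑s) →
      DefinedOver P A →
      ∃ db : Fin n → K, (∀ i, db i ∈ C) ∧ (∀ f ∈ P, MvPolynomial.eval db f = 0) ∧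
        Subfield.trdegTuple A db = (d : Cardinal)) :
    DefinedOver P C := by
  classical
  refine definedOver_of_dense C P fun f hf => ?_
  obtain ⟨G, hG⟩ := (inferInstance : IsNoetherianRing (MvPolynomial (Fin n) K)).noetherian P
  let s : Finset K := (insert f G).biUnion fun g => g.support.image fun m => g.coeff m
  have hs : ∀ g ∈ insert f G, ∀ m, g.coeff m ∈ Subfield.closure (s : Set K) := by
    intro g hg m
    by_cases hm : g.coeff m = 0
    · rw [hm]; exact zero_mem _
    · apply Subfield.subset_closure
      exact Finset.mem_biUnion.2 ⟨g, hg, Finset.mem_image.2 ⟨m, by simpa using hm, rfl⟩⟩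
  have hdef : DefinedOver P (Subfield.closure (s : Set K)) := by
    refine le_antisymm ?_ (Ideal.span_le.2 fun f hf => hf.1)
    conv_lhs => rw [← hG]
    refine Ideal.span_le.2 fun g hg => Ideal.subset_span ⟨?_, hs g (Finset.mem_insert_of_mem hg)⟩
    rw [← hG]
    exact Submodule.subset_span hg
  obtain ⟨db, hC, hv, ht⟩ := hgen _ ⟨s, rfl⟩ hdef
  refine ⟨db, hC, hv, ?_⟩
  obtain ⟨I, hI, j, hj, hle⟩ := exists_indep (Subfield.closure (s : Set K)) db
  rw [ht] at hle
  exact eval_ne_zero_of_generic P hP hdef d hd db hv I hI j hj hle f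
    (hs f (Finset.mem_insert_self _ _)) hf
end

section
/- Let K be a differential field with derivation D and field of constants C, and let A, B ⊆ K be algebraically closed subfields containing C, each of finite transcendence degree over C. Let A∨B denote the relative algebraic closure in K of the subfield generated by A ∪ B, and assume σ(A∨B) < ∞. For an intermediate field C ⊆ F ⊆ K with trdeg_C(F) < ∞ and σ(F) < ∞, set δ(F) = trdeg_C(F) − σ(F) ∈ ℤ (note that σ(A), σ(B), σ(A∩B) ≤ σ(A∨B) < ∞, so all the relevant values of δ are defined). Then δ(A∨B) + δ(A ∩ B) ≤ δ(A) + δ(B), i.e. the predimension δ given by the Ax–Schanuel inequality for the exponential differential equation is submodular. -/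
open scoped ENat

/-- For an intermediate field `C ⊆ A ⊆ K` of a differential field `K` with constants `C`,
`σ(A) ∈ ℕ∞` is the supremum of the natural numbers `n` for which there are solutions
`(a₁, b₁), …, (aₙ, bₙ) ∈ A` of the exponential differential equation `D y = y·D x`
with `b i ≠ 0` and `a₁, …, aₙ` linearly independent over `ℚ` modulo `C` (i.e. their
images in the quotient `ℚ`-vector space `K/C` are linearly independent over `ℚ`). -/
noncomputable def sigmaExp {K : Type*} [Field K] [CharZero K] (D : Derivation ℚ K K)
    (A : Subfield K) : ℕ∞ :=
  sSup {N : ℕ∞ | ∃ n : ℕ, N = n ∧ ∃ a b : Fin n → K,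
    (∀ i, a i ∈ A) ∧ (∀ i, b i ∈ A) ∧ (∀ i, b i ≠ 0) ∧
    (∀ i, D (b i) = b i * D (a i)) ∧
    LinearIndependent ℚ
      (fun i => (Submodule.Quotient.mk (a i) : K ⧸ LinearMap.ker D.toLinearMap))}

open AlgebraicIndependent in
lemma aux_trdeg {K : Type*} [Field K] (C E : Subfield K) (t : ℕ)
    (h : Subfield.trdeg C E = (t : Cardinal)) :
    (matroid C K).eRk (E : Set K) = t := by
  obtain ⟨I, hI⟩ := (matroid C K).exists_isBasis (E : Set K) (by simp)
  have hbdd : BddAbove (Set.range (fun t : {t : Set K // t ⊆ (E : Set K) ∧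
      AlgebraicIndependent C ((↑) : t → K)} => Cardinal.mk t.1)) := Cardinal.bddAbove_of_small
  have h1 : Cardinal.mk I ≤ t := by
    rw [← h]
    exact le_ciSup hbdd ⟨I, hI.subset, hI.indep⟩
  have hfin : Cardinal.mk I < Cardinal.aleph0 := h1.trans_lt (Cardinal.natCast_lt_aleph0)
  obtain ⟨m, hm⟩ := Cardinal.lt_aleph0.1 hfin
  have hme : (matroid C K).eRk (E : Set K) = m := by
    rw [hI.eRk_eq_encard, Set.encard, ENat.card, hm]; simp
  have h2 : (t : Cardinal) ≤ Cardinal.mk I := by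
    rw [← h]
    refine ciSup_le' ?_
    rintro ⟨J, hJE, hJ⟩
    have h3 := Matroid.Indep.encard_le_eRk_of_subset (M := matroid C K) (I := J) hJ hJE
    rw [hme, Set.encard, ENat.card, Cardinal.toENat_le_natCast_iff] at h3
    rw [hm]; exact h3
  rw [hm] at h1 h2
  rw [hme]
  have := le_antisymm (Nat.cast_le.1 h1) (Nat.cast_le.1 h2)
  rw [this]

open AlgebraicIndependent in
open scoped IntermediateField.algebraAdjoinAdjoin in
lemma aux_trdeg_submod {K : Type*} [Field K] (C A B AB : Subfield K)
    (hAB : (AB : Set K) =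
      {x : K | IsAlgebraic (Subfield.closure ((A : Set K) ∪ (B : Set K))) x})
    (tA tB tAB tI : ℕ)
    (htA : Subfield.trdeg C A = (tA : Cardinal))
    (htB : Subfield.trdeg C B = (tB : Cardinal))
    (htAB : Subfield.trdeg C AB = (tAB : Cardinal))
    (htI : Subfield.trdeg C (A ⊓ B) = (tI : Cardinal)) : tI + tAB ≤ tA + tB := by
  have hA := aux_trdeg C A tA htA
  have hB := aux_trdeg C B tB htB
  have hAB' := aux_trdeg C AB tAB htAB
  have hI := aux_trdeg C (A ⊓ B) tI htI
  have hsub : (AB : Set K) ⊆ (matroid C K).closure ((A : Set K) ∪ B) := by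
    rw [matroid_closure_eq, hAB]
    intro x hx
    rw [Set.mem_ofPred_eq] at hx
    change IsAlgebraic (Algebra.adjoin C ((A : Set K) ∪ B)) x
    rw [IsFractionRing.isAlgebraic_iff (Algebra.adjoin C ((A : Set K) ∪ B))
      (IntermediateField.adjoin C ((A : Set K) ∪ B)) K]
    have hle : Subfield.closure ((A : Set K) ∪ B) ≤
        (IntermediateField.adjoin C ((A : Set K) ∪ B)).toSubfield :=
      Subfield.closure_le.2 (IntermediateField.subset_adjoin C _)
    letI : Algebra (Subfield.closure ((A : Set K) ∪ B))
        (IntermediateField.adjoin C ((A : Set K) ∪ B)) := (Subfield.inclusion hle).toAlgebra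
    haveI : IsScalarTower (Subfield.closure ((A : Set K) ∪ B))
        (IntermediateField.adjoin C ((A : Set K) ∪ B)) K :=
      IsScalarTower.of_algebraMap_eq (fun _ => rfl)
    exact hx.extendScalars (RingHom.injective _)
  have h1 := (matroid C K).eRk_mono hsub
  rw [Matroid.eRk_closure_eq, hAB'] at h1
  have h2 := (matroid C K).eRk_inter_add_eRk_union_le (A : Set K) B
  rw [show (A : Set K) ∩ B = ((A ⊓ B : Subfield K) : Set K) from rfl, hI, hA, hB] at h2
  have h3 := (add_le_add_right h1 (tI : ℕ∞)).trans h2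
  exact_mod_cast h3

/-- exponential data in A, as a predicate on classes mod constants -/
def ExpIn {K : Type*} [Field K] [CharZero K] (D : Derivation ℚ K K)
    (A : Subfield K) (w : K ⧸ LinearMap.ker D.toLinearMap) : Prop :=
  ∃ a ∈ A, ∃ b ∈ A, b ≠ 0 ∧ D b = b * D a ∧ Submodule.Quotient.mk a = w

lemma ExpIn.add {K : Type*} [Field K] [CharZero K] {D : Derivation ℚ K K}
    {A : Subfield K} {v w : K ⧸ LinearMap.ker D.toLinearMap}
    (hv : ExpIn D A v) (hw : ExpIn D A w) : ExpIn D A (v + w) := by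
  obtain ⟨a, ha, b, hb, hb0, h, rfl⟩ := hv
  obtain ⟨a', ha', b', hb', hb0', h', rfl⟩ := hw
  refine ⟨a + a', A.add_mem ha ha', b * b', A.mul_mem hb hb', mul_ne_zero hb0 hb0', ?_, rfl⟩
  rw [D.leibniz, h, h', map_add, smul_eq_mul, smul_eq_mul]; ring

lemma ExpIn.mono {K : Type*} [Field K] [CharZero K] {D : Derivation ℚ K K}
    {A B : Subfield K} (hAB : A ≤ B) {v : K ⧸ LinearMap.ker D.toLinearMap}
    (hv : ExpIn D A v) : ExpIn D B v := by
  obtain ⟨a, ha, b, hb, h⟩ := hv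
  exact ⟨a, hAB ha, b, hAB hb, h⟩

lemma ExpIn.smul {K : Type*} [Field K] [CharZero K] {D : Derivation ℚ K K}
    {A : Subfield K} [IsAlgClosed A] (q : ℚ) {v : K ⧸ LinearMap.ker D.toLinearMap}
    (hv : ExpIn D A v) : ExpIn D A (q • v) := by
  obtain ⟨a, ha, b, hb, hb0, h, rfl⟩ := hv
  obtain ⟨c, hc⟩ := IsAlgClosed.exists_pow_nat_eq (⟨b, hb⟩ : A) q.pos
  have hcb : (c : K) ^ q.den = b := congrArg (fun z : A => (z : K)) hc
  have hd : (q.den : K) ≠ 0 := by exact_mod_cast q.den_ne_zero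
  have hc0 : (c : K) ≠ 0 := by
    intro h0
    rw [h0, zero_pow q.den_ne_zero] at hcb
    exact hb0 hcb.symm
  have hDc : (q.den : K) * D c = c * D a := by
    rw [← hcb, D.leibniz_pow] at h
    have hp : (c : K) ^ q.den = c ^ (q.den - 1) * c := by
      rw [← pow_succ, Nat.sub_add_cancel q.pos]
    rw [hp] at h
    simp only [nsmul_eq_mul, smul_eq_mul] at h
    have hcp : (c : K) ^ (q.den - 1) ≠ 0 := pow_ne_zero _ hc0
    apply mul_left_cancel₀ hcp
    linear_combination h
  refine ⟨q • a, ?_, (c : K) ^ q.num, zpow_mem c.2 _, zpow_ne_zero _ hc0, ?_, rfl⟩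
  · rw [Rat.smul_def]
    exact A.mul_mem (SubfieldClass.ratCast_mem A q) ha
  · rw [D.leibniz_zpow, D.map_smul, Rat.smul_def, zsmul_eq_mul, smul_eq_mul]
    have hq : (q : K) * q.den = q.num := by
      exact_mod_cast Rat.mul_den_eq_num q
    have hz : (c : K) ^ q.num = c ^ (q.num - 1) * c := by
      rw [← zpow_add_one₀ hc0]; simp
    rw [hz, ← hq]
    linear_combination (c : K) ^ (q.num - 1) * q * hDc

/-- The `ℚ`-space of exponential classes. -/
def expSpace {K : Type*} [Field K] [CharZero K] (D : Derivation ℚ K K)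
    (A : Subfield K) [IsAlgClosed A] : Submodule ℚ (K ⧸ LinearMap.ker D.toLinearMap) where
  carrier := {w | ExpIn D A w}
  zero_mem' := ⟨0, A.zero_mem, 1, A.one_mem, one_ne_zero, by simp, rfl⟩
  add_mem' := ExpIn.add
  smul_mem' := fun q _ hv => ExpIn.smul q hv

lemma aux_rank_le {K : Type*} [Field K] [CharZero K] (D : Derivation ℚ K K)
    (A : Subfield K) (s : ℕ) (hs : sigmaExp D A = (s : ℕ∞))
    (W : Submodule ℚ (K ⧸ LinearMap.ker D.toLinearMap)) (hW : ∀ w ∈ W, ExpIn D A w) :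
    Module.Finite ℚ W ∧ Module.finrank ℚ W ≤ s := by
  have hr : Module.rank ℚ W ≤ s := by
    apply rank_le
    intro S hS
    have hS' := (hS.map' W.subtype (Submodule.ker_subtype W)).comp _ S.equivFin.symm.injective
    choose a ha b hb hb0 hD hmk using
      fun i : Fin S.card => hW _ ((S.equivFin.symm i).1.2)
    have : (S.card : ℕ∞) ≤ sigmaExp D A := by
      apply le_sSup
      refine ⟨_, rfl, a, b, ha, hb, hb0, hD, ?_⟩
      rw [funext hmk]
      exact hS'
    rw [hs] at this
    exact_mod_cast this
  have hf : Module.Finite ℚ W :=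
    Module.rank_lt_aleph0_iff.1 (hr.trans_lt Cardinal.natCast_lt_aleph0)
  exact ⟨hf, Module.finrank_le_of_rank_le hr⟩

lemma aux_le_finrank {K : Type*} [Field K] [CharZero K] (D : Derivation ℚ K K)
    (A : Subfield K) (s : ℕ) (hs : sigmaExp D A = (s : ℕ∞))
    (W : Submodule ℚ (K ⧸ LinearMap.ker D.toLinearMap)) (hW : ∀ w, ExpIn D A w → w ∈ W)
    [Module.Finite ℚ W] : s ≤ Module.finrank ℚ W := by
  have : (s : ℕ∞) ≤ Module.finrank ℚ W := by
    rw [← hs]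
    apply sSup_le
    rintro _ ⟨n, rfl, a, b, ha, hb, hb0, hD, hli⟩
    let f : Fin n → W := fun i => ⟨_, hW _ ⟨a i, ha i, b i, hb i, hb0 i, hD i, rfl⟩⟩
    have hf : LinearIndependent ℚ f := LinearIndependent.of_comp W.subtype hli
    have := hf.fintype_card_le_finrank
    rw [Fintype.card_fin] at this
    exact_mod_cast this
  exact_mod_cast this

/-- Submodularity of the Ax–Schanuel predimension `δ(F) = td_C(F) − σ(F)` for the
exponential differential equation: `δ(A∨B) + δ(A ∩ B) ≤ δ(A) + δ(B)`, where `A`, `B`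
are algebraically closed subfields of `K` containing the constants `C`, of finite
transcendence degree over `C`, and `A∨B` is the relative algebraic closure in `K` of
the subfield generated by `A ∪ B` (assumed to have finite `σ`). -/
theorem predimension_submodular {K : Type*} [Field K] [CharZero K] (D : Derivation ℚ K K)
    (C : Subfield K) (hC : (C : Set K) = {a : K | D a = 0})
    (A B : Subfield K) (hCA : C ≤ A) (hCB : C ≤ B)
    (hAac : IsAlgClosed A) (hBac : IsAlgClosed B)
    (AB : Subfield K)
    (hAB : (AB : Set K) =
      {x : K | IsAlgebraic (Subfield.closure ((A : Set K) ∪ (B : Set K))) x})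
    (tA tB tAB tI : ℕ)
    (htA : Subfield.trdeg C A = (tA : Cardinal))
    (htB : Subfield.trdeg C B = (tB : Cardinal))
    (htAB : Subfield.trdeg C AB = (tAB : Cardinal))
    (htI : Subfield.trdeg C (A ⊓ B) = (tI : Cardinal))
    (sA sB sAB sI : ℕ)
    (hsA : sigmaExp D A = (sA : ℕ∞)) (hsB : sigmaExp D B = (sB : ℕ∞))
    (hsAB : sigmaExp D AB = (sAB : ℕ∞)) (hsI : sigmaExp D (A ⊓ B) = (sI : ℕ∞)) :
    ((tAB : ℤ) - (sAB : ℤ)) + ((tI : ℤ) - (sI : ℤ)) ≤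
      ((tA : ℤ) - (sA : ℤ)) + ((tB : ℤ) - (sB : ℤ)) := by
  have ht := aux_trdeg_submod C A B AB hAB tA tB tAB tI htA htB htAB htI
  have hABs : (A : Set K) ∪ B ⊆ AB := by
    intro x hx
    rw [hAB]
    exact isAlgebraic_algebraMap
      (⟨x, Subfield.subset_closure hx⟩ : Subfield.closure ((A : Set K) ∪ (B : Set K)))
  have hA_le : A ≤ AB := fun x hx => hABs (Or.inl hx)
  have hB_le : B ≤ AB := fun x hx => hABs (Or.inr hx)
  have hmemC : ∀ x : K, D x = 0 → x ∈ C := by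
    intro x hx
    rw [← SetLike.mem_coe, hC]
    exact hx
  obtain ⟨fA, -⟩ := aux_rank_le D A sA hsA (expSpace D A) (fun _ h => h)
  obtain ⟨fB, -⟩ := aux_rank_le D B sB hsB (expSpace D B) (fun _ h => h)
  have lA := aux_le_finrank D A sA hsA (expSpace D A) (fun _ h => h)
  have lB := aux_le_finrank D B sB hsB (expSpace D B) (fun _ h => h)
  obtain ⟨-, lS⟩ := aux_rank_le D AB sAB hsAB (expSpace D A ⊔ expSpace D B) (by
    intro w hw
    obtain ⟨u, hu, v, hv, rfl⟩ := Submodule.mem_sup.1 hw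
    exact (ExpIn.mono hA_le hu).add (ExpIn.mono hB_le hv))
  obtain ⟨-, lI⟩ := aux_rank_le D (A ⊓ B) sI hsI (expSpace D A ⊓ expSpace D B) (by
    rintro w ⟨⟨a, ha, b, hb, hb0, h, rfl⟩, ⟨a', ha', b', hb', hb0', h', haa⟩⟩
    have h1 : D a' = D a := by
      have h2 := (Submodule.Quotient.eq _).1 haa
      have h3 : D (a' - a) = 0 := h2
      rw [map_sub] at h3
      exact sub_eq_zero.1 h3
    have haB : a ∈ B := by
      have h2 : a - a' ∈ B := hCB (hmemC _ (by rw [map_sub, h1, sub_self]))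
      simpa using B.add_mem h2 ha'
    have hbB : b ∈ B := by
      have h2 : b / b' ∈ B := hCB (hmemC _ (by
        rw [D.leibniz_div, h, h', h1]
        simp only [smul_eq_mul]; ring))
      have h3 := B.mul_mem h2 hb'
      rwa [div_mul_cancel₀ _ hb0'] at h3
    exact ⟨a, ⟨ha, haB⟩, b, ⟨hb, hbB⟩, hb0, h, rfl⟩)
  have hd := Submodule.finrank_sup_add_finrank_inf_eq (expSpace D A) (expSpace D B)
  omega
end
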